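/- Let n ≥ 1 and let T be a nice extension of ZFC. Assume T. Suppose that M and N are inner models each of which Σ_n-resembles the core model over T, and M is Σ_n-rigid. Then M = N. -/

import Mathlib

/- ## A framework for transitive class/set models of fragments of ZFC,
     inside the universe `ZFSet` of ZF sets. -/

open FirstOrder FirstOrder.Language

/-- The language of set theory: a single binary relation symbol `∈`. -/
inductive SetLRel : ℕ → Type
  | mem : SetLRel 2

/-- The first-order language of set theory. -/
def setL : FirstOrder.Language := ⟨fun _ => Empty, SetLRel⟩

/-- Evaluation of a term of the language of set theory (terms are just variables). -/
def tval {n : ℕ} (v : Fin n → ZFSet) : setL.Term (Empty ⊕ Fin n) → ZFSet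
  | .var (Sum.inl e) => e.elim
  | .var (Sum.inr i) => v i
  | .func f _ => f.elim

/-- Tarskian satisfaction of a formula of the language of set theory in a class `S` of
ZF-sets (equipped with true membership), under the assignment `v`. -/
def ZSat (S : Set ZFSet) : ∀ {n : ℕ}, setL.BoundedFormula Empty n → (Fin n → ZFSet) → Prop
  | _, .falsum, _ => False
  | _, .equal t u, v => tval v t = tval v u
  | _, .rel R ts, v =>
      match R with
      | SetLRel.mem => tval v (ts 0) ∈ tval v (ts 1)
  | _, .imp φ ψ, v => ZSat S φ v → ZSat S ψ v
  | _, .all φ, v => ∀ x ∈ S, ZSat S φ (Fin.snoc v x)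

/-- Satisfaction of a sentence in a class of ZF-sets. -/
def SatS (S : Set ZFSet) (σ : setL.Sentence) : Prop := ZSat S σ finZeroElim

/-- A class of ZF-sets is transitive. -/
def IsTransClass (S : Set ZFSet) : Prop := ∀ x ∈ S, ∀ y ∈ x, y ∈ S

/-- `r` is a well-ordering of the set `x`, from the point of view of the class `S`
(Kuratowski pairs code the relation; minimality is required for nonempty subsets of `x`
lying in `S`). -/
def WellOrders (S : Set ZFSet) (r x : ZFSet) : Prop :=
  (∀ a ∈ x, ZFSet.pair a a ∉ r) ∧
  (∀ a ∈ x, ∀ b ∈ x, ∀ c ∈ x, ZFSet.pair a b ∈ r → ZFSet.pair b c ∈ r → ZFSet.pair a c ∈ r) ∧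
  (∀ a ∈ x, ∀ b ∈ x, a ≠ b → (ZFSet.pair a b ∈ r ∨ ZFSet.pair b a ∈ r)) ∧
  (∀ y ∈ S, (∀ z ∈ y, z ∈ x) → y ≠ ∅ → ∃ m ∈ y, ∀ z ∈ y, ZFSet.pair z m ∉ r)

/-- `S` is a transitive model of ZFC⁻, i.e. of ZFC stated with the Replacement Scheme and
the Well-Ordering Theorem but without the Power Set Axiom.  (Extensionality and Foundation
are automatic for transitive classes of ZF-sets.) -/
def ModelsZFCminus (S : Set ZFSet) : Prop :=
  IsTransClass S ∧
  (∅ : ZFSet) ∈ S ∧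
  (∀ x ∈ S, ∀ y ∈ S, ({x, y} : ZFSet) ∈ S) ∧
  (∀ x ∈ S, (ZFSet.sUnion x : ZFSet) ∈ S) ∧
  ZFSet.omega ∈ S ∧
  (∀ (n : ℕ) (φ : setL.BoundedFormula Empty (n + 1)) (p : Fin n → ZFSet),
    (∀ i, p i ∈ S) → ∀ a ∈ S, ∃ b ∈ S, ∀ y, y ∈ b ↔ (y ∈ a ∧ ZSat S φ (Fin.snoc p y))) ∧
  (∀ (n : ℕ) (φ : setL.BoundedFormula Empty (n + 2)) (p : Fin n → ZFSet),
    (∀ i, p i ∈ S) → ∀ a ∈ S,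
      (∀ x ∈ a, ∃! y, y ∈ S ∧ ZSat S φ (Fin.snoc (Fin.snoc p x) y)) →
      ∃ b ∈ S, ∀ y, y ∈ b ↔ ∃ x ∈ a, y ∈ S ∧ ZSat S φ (Fin.snoc (Fin.snoc p x) y)) ∧
  (∀ x ∈ S, ∃ r ∈ S, WellOrders S r x)

/-- `S` is a transitive model of ZFC. -/
def ModelsZFC (S : Set ZFSet) : Prop :=
  ModelsZFCminus S ∧ ∀ x ∈ S, ∃ p ∈ S, ∀ y, y ∈ p ↔ (y ∈ S ∧ y ⊆ x)

/-- `f` is (the graph of) a surjection of `a` onto `b`. -/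
def SurjFun (f a b : ZFSet) : Prop :=
  ZFSet.IsFunc a b f ∧ ∀ y ∈ b, ∃ x ∈ a, ZFSet.pair x y ∈ f

/-- `f` is (the graph of) an injection of `a` into `b`. -/
def InjFun (f a b : ZFSet) : Prop :=
  ZFSet.IsFunc a b f ∧ ∀ x ∈ a, ∀ x' ∈ a, ∀ y, ZFSet.pair x y ∈ f → ZFSet.pair x' y ∈ f → x = x'

/-- `f` is (the graph of) a cofinal function from `β` into the ordinal `α`. -/
def CofinalFun (f β α : ZFSet) : Prop :=
  ZFSet.IsFunc β α f ∧ ∀ ξ ∈ α, ∃ η ∈ β, ∃ ζ, ZFSet.pair η ζ ∈ f ∧ (ξ ∈ ζ ∨ ξ = ζ)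

/-- `μ = cof(α)` as computed inside the class `S` (for `S = Set.univ`, the true cofinality). -/
def IsCofOf (S : Set ZFSet) (α μ : ZFSet) : Prop :=
  μ ∈ S ∧ μ.IsOrdinal ∧ (∃ f ∈ S, CofinalFun f μ α) ∧
  ∀ ν ∈ S, ZFSet.IsOrdinal ν → (∃ f ∈ S, CofinalFun f ν α) → μ ⊆ ν

/-- `κ` is a cardinal from the point of view of the class `S`
(for `S = Set.univ`, a true cardinal). -/
def IsCardIn (S : Set ZFSet) (κ : ZFSet) : Prop :=
  κ.IsOrdinal ∧ ∀ α ∈ κ, ∀ f ∈ S, ¬ SurjFun f α κ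

/-- `μ` is an (infinite) regular cardinal from the point of view of the class `S`. -/
def IsRegularIn (S : Set ZFSet) (μ : ZFSet) : Prop :=
  ZFSet.omega ⊆ μ ∧ IsCardIn S μ ∧ IsCofOf S μ μ

/-- `ν = μ⁺`, the cardinal successor of `μ`, as computed in the class `S`. -/
def CardSuccIn (S : Set ZFSet) (μ ν : ZFSet) : Prop :=
  ν ∈ S ∧ IsCardIn S ν ∧ μ ∈ ν ∧ ∀ ξ ∈ S, IsCardIn S ξ → μ ∈ ξ → ν ⊆ ξ

/-- `μ` is the largest cardinal of the model `S`. -/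
def IsLargestCardIn (S : Set ZFSet) (μ : ZFSet) : Prop :=
  μ ∈ S ∧ IsCardIn S μ ∧ ∀ x ∈ S, IsCardIn S x → x ⊆ μ

/-- `α = sup A`, for `A` a collection of ordinals: `α` is the least ordinal above all of them. -/
def IsSupOf (α : ZFSet) (A : Set ZFSet) : Prop :=
  α.IsOrdinal ∧ (∀ a ∈ A, a ⊆ α) ∧ ∀ β : ZFSet, β.IsOrdinal → (∀ a ∈ A, a ⊆ β) → α ⊆ β

/-- `π` is an elementary embedding (for the language of set theory) from the class `S`
into the class `T`. -/
def IsElem (S T : Set ZFSet) (π : ZFSet → ZFSet) : Prop :=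
  (∀ x ∈ S, π x ∈ T) ∧
  ∀ (n : ℕ) (φ : setL.BoundedFormula Empty n) (v : Fin n → ZFSet),
    (∀ i, v i ∈ S) → (ZSat S φ v ↔ ZSat T φ (fun i => π (v i)))

/-- `S` is an inner model (of ZFC): a transitive proper class model of ZFC containing
all the ordinals. -/
def IsInnerModel (S : Set ZFSet) : Prop :=
  ModelsZFC S ∧ ∀ x : ZFSet, x.IsOrdinal → x ∈ S

/-- `μ` is a measurable cardinal from the point of view of the class `S`: there is a
`μ`-complete nonprincipal ultrafilter on `μ` in `S`. -/
def MeasurableIn (S : Set ZFSet) (μ : ZFSet) : Prop :=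
  IsCardIn S μ ∧ ZFSet.omega ∈ μ ∧
  ∃ U ∈ S,
    (∀ x ∈ U, x ⊆ μ) ∧ μ ∈ U ∧ (∅ : ZFSet) ∉ U ∧
    (∀ x ∈ U, ∀ y ∈ S, y ⊆ μ → x ⊆ y → y ∈ U) ∧
    (∀ x ∈ S, ∀ y ∈ S, x ⊆ μ → y ⊆ μ → (∀ w ∈ μ, (w ∈ x ↔ w ∉ y)) → (x ∈ U ∨ y ∈ U)) ∧
    (∀ z ∈ μ, ∃ x ∈ U, z ∉ x) ∧
    (∀ γ ∈ μ, ∀ f ∈ S,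
      (∀ η ∈ γ, ∃ x ∈ U, ZFSet.pair η x ∈ f) →
      (∀ p ∈ f, ∃ η ∈ γ, ∃ x ∈ U, p = ZFSet.pair η x) →
      ∃ b ∈ U, ∀ w : ZFSet, w ∈ b ↔ (w ∈ μ ∧ ∀ η ∈ γ, ∀ x, ZFSet.pair η x ∈ f → w ∈ x))

/-- `μ` is singular from the point of view of `S`: some function in `S` maps a smaller
ordinal cofinally into `μ`. -/
def SingularIn (S : Set ZFSet) (μ : ZFSet) : Prop :=
  ∃ γ : ZFSet, γ.IsOrdinal ∧ γ ∈ μ ∧ ∃ f ∈ S, CofinalFun f γ μ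

/-- `μ` is a strong limit cardinal from the point of view of `S`: `2^κ < μ` for all `κ < μ`,
as computed in `S`. -/
def StrongLimitIn (S : Set ZFSet) (μ : ZFSet) : Prop :=
  IsCardIn S μ ∧ ZFSet.omega ∈ μ ∧
  ∀ κ ∈ μ, ∀ p ∈ S, (∀ z : ZFSet, z ∈ p ↔ (z ∈ S ∧ z ⊆ κ)) →
    ∃ α ∈ μ, ∃ f ∈ S, InjFun f p α

/-- `M` is close to `N` (`M ⊆ N` inner models): every cardinal `μ` of `N` which is
measurable or a singular strong limit in `N` is measurable or singular in `M`, and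
`μ⁺` is computed correctly by `M`, i.e. `μ^{+,M} = μ^{+,N}`. -/
def CloseTo (M N : Set ZFSet) : Prop :=
  ∀ μ ∈ N, IsCardIn N μ →
    (MeasurableIn N μ ∨ (SingularIn N μ ∧ StrongLimitIn N μ)) →
    ((MeasurableIn M μ ∨ SingularIn M μ) ∧
      ∀ ν : ZFSet, (CardSuccIn M μ ν ↔ CardSuccIn N μ ν))

/-- `S ⊨ "V = HOD"`: every member of `S` is (the unique element) definable over `(S, ∈)`
from ordinal parameters. -/
def ModelsVeqHOD (S : Set ZFSet) : Prop :=
  ∀ x ∈ S, ∃ (n : ℕ) (φ : setL.BoundedFormula Empty (n + 1)) (p : Fin n → ZFSet),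
    (∀ i, p i ∈ S ∧ (p i).IsOrdinal) ∧ ∀ y ∈ S, (ZSat S φ (Fin.snoc p y) ↔ y = x)

/-- `t` is the transitive closure of `x`. -/
def IsTransClosureOf (t x : ZFSet) : Prop :=
  x ⊆ t ∧ t.IsTransitive ∧ ∀ u : ZFSet, x ⊆ u → u.IsTransitive → t ⊆ u

/-- `H^S_ν`: the class of members of `S` whose transitive closure has size `< ν`,
as computed in `S`. -/
def HIn (S : Set ZFSet) (ν : ZFSet) : Set ZFSet :=
  {x | x ∈ S ∧ ∃ t ∈ S, IsTransClosureOf t x ∧ ∃ κ ∈ ν, ∃ f ∈ S, SurjFun f κ t}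

/-- The von Neumann natural number `n` as a ZF-set. -/
def natZ : ℕ → ZFSet
  | 0 => ∅
  | n + 1 => insert (natZ n) (natZ n)

/-- The term given by the `i`-th bounded variable. -/
def mvar {n : ℕ} (i : Fin n) : setL.Term (Empty ⊕ Fin n) :=
  FirstOrder.Language.Term.var (Sum.inr i)

/-- The atomic formula `v i ∈ v j`. -/
def memF {n : ℕ} (i j : Fin n) : setL.BoundedFormula Empty n :=
  FirstOrder.Language.Relations.boundedFormula₂ SetLRel.mem (mvar i) (mvar j)

/-- Δ₀ (bounded) formulas of the language of set theory. -/
inductive IsDelta0 : ∀ {n : ℕ}, setL.BoundedFormula Empty n → Prop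
  | falsum {n : ℕ} : IsDelta0 (n := n) FirstOrder.Language.BoundedFormula.falsum
  | equal {n : ℕ} (t u : setL.Term (Empty ⊕ Fin n)) :
      IsDelta0 (FirstOrder.Language.BoundedFormula.equal t u)
  | rel {n l : ℕ} (R : setL.Relations l) (ts : Fin l → setL.Term (Empty ⊕ Fin n)) :
      IsDelta0 (FirstOrder.Language.BoundedFormula.rel R ts)
  | imp {n : ℕ} {φ ψ : setL.BoundedFormula Empty n} :
      IsDelta0 φ → IsDelta0 ψ → IsDelta0 (φ.imp ψ)
  | ball {n : ℕ} (j : Fin n) {φ : setL.BoundedFormula Empty (n + 1)} :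
      IsDelta0 φ →
      IsDelta0 (((memF (Fin.last n) j.castSucc).imp φ).all)

mutual
  /-- Σ_k formulas of the Levy hierarchy. -/
  inductive LevySigma : ℕ → ∀ {n : ℕ}, setL.BoundedFormula Empty n → Prop
    | delta0 {n : ℕ} {φ : setL.BoundedFormula Empty n} : IsDelta0 φ → LevySigma 0 φ
    | ofPi {k : ℕ} {n : ℕ} {φ : setL.BoundedFormula Empty n} :
        LevyPi k φ → LevySigma (k + 1) φ
    | ex {k : ℕ} {n : ℕ} {φ : setL.BoundedFormula Empty (n + 1)} :
        LevySigma (k + 1) φ → LevySigma (k + 1) φ.ex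

  /-- Π_k formulas of the Levy hierarchy. -/
  inductive LevyPi : ℕ → ∀ {n : ℕ}, setL.BoundedFormula Empty n → Prop
    | delta0 {n : ℕ} {φ : setL.BoundedFormula Empty n} : IsDelta0 φ → LevyPi 0 φ
    | ofSigma {k : ℕ} {n : ℕ} {φ : setL.BoundedFormula Empty n} :
        LevySigma k φ → LevyPi (k + 1) φ
    | all {k : ℕ} {n : ℕ} {φ : setL.BoundedFormula Empty (n + 1)} :
        LevyPi (k + 1) φ → LevyPi (k + 1) φ.all
end

/-- `L[A]`, for `A` a set (of ordinals): the smallest inner model containing `A`. -/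
def LSet (A : ZFSet) : Set ZFSet :=
  ⋂₀ {W : Set ZFSet | IsInnerModel W ∧ A ∈ W}

/-- The sentence "for every set of ordinals `A`, `L[A] ⊨ θ`", interpreted in the
transitive class `S`.  (For `A ∈ S`, `L[A]` as computed in `S` is the true `L[A]`.) -/
def NiceHolds (θ : setL.Sentence) (S : Set ZFSet) : Prop :=
  ∀ A ∈ S, (∀ x ∈ A, ZFSet.IsOrdinal x) → SatS (LSet A) θ

/-- The nice extension `T = ZFC + "∀ set of ordinals A, L[A] ⊨ θ"` of ZFC holds in the
transitive class `S`. -/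
def THolds (θ : setL.Sentence) (S : Set ZFSet) : Prop :=
  ModelsZFC S ∧ NiceHolds θ S

/-- `C` is an inner model of ZFC from the point of view of the inner model `S`. -/
def InnerModelIn (S C : Set ZFSet) : Prop :=
  C ⊆ S ∧ ModelsZFC C ∧ ∀ x : ZFSet, x.IsOrdinal → x ∈ C

/-- The class defined, in the transitive class model `S`, by the formula
`φ(v) = ∃μ (μ is a strong limit cardinal ∧ v ∈ H_μ ∧ H_μ ⊨ θ(v))`, where `θ` is the
witnessing formula.  This is `φ^S`. -/
def locClass (S : Set ZFSet) (θ : setL.BoundedFormula Empty 1) : Set ZFSet :=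
  {x | ∃ μ ∈ S, StrongLimitIn S μ ∧ x ∈ HIn S μ ∧ ZSat (HIn S μ) θ ![x]}

universe u

/-- The formula `φ(v) = ∃μ (μ strong limit ∧ v ∈ H_μ ∧ H_μ ⊨ θ(v))` (determined by its
witnessing formula `θ`) locally defines an inner model over the nice extension
`T = ZFC + "∀ A, L[A] ⊨ θT"`:  provably in `T`, `φ^V` is an inner model of ZFC and, for
every strong limit cardinal `μ`, `H^{φ^V}_μ = θ^{H_μ}`. -/
def LocallyDefinesInner (θT : setL.Sentence) (θ : setL.BoundedFormula Empty 1) : Prop :=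
  ∀ S : Set ZFSet.{u}, IsInnerModel S → THolds θT S →
    InnerModelIn S (locClass S θ) ∧
    ∀ μ ∈ S, StrongLimitIn S μ →
      HIn (locClass S θ) μ = {x | x ∈ HIn S μ ∧ ZSat (HIn S μ) θ ![x]}

/-- The formula `φ` (given by its witnessing formula `θφ`) locally defines a *close* inner
model over `T`:  it locally defines an inner model over `T`, and `T` proves that `φ^V` is
close to `V`. -/
def LocallyDefinesCloseInner (θT : setL.Sentence) (θφ : setL.BoundedFormula Empty 1) : Prop :=
  LocallyDefinesInner.{u} θT θφ ∧
  ∀ S : Set ZFSet.{u}, IsInnerModel S → THolds θT S → CloseTo (locClass S θφ) S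

/-- `M` Σ_n-resembles the core model over the nice extension `T = ZFC + "∀ A, L[A] ⊨ θT"`,
relative to the fixed Gödel numbering `code` of formulas:  there are a formula `φ` (given
by its witnessing formula `θφ`) locally defining a close inner model over `T` with
`M = φ^V`, and a Σ_n formula `ψ(u, v, w)` such that, provably in `T`:
(1) `φ^V ⊨ V = HOD`;  (2) `φ^V ⊨ ∀x φ(x)`;  and (3) for any Σ₂ formula `γ`, if `W = γ^V`
is a close inner model of ZFC then `ψ(⌜γ⌝, v, w)` defines an elementary embedding from
`φ^V` into `φ^W`. -/
def SigmaResemblesCore (n : ℕ) (θT : setL.Sentence)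
    (code : setL.BoundedFormula Empty 1 → ℕ) (M : Set ZFSet.{u}) : Prop :=
  ∃ (θφ : setL.BoundedFormula Empty 1) (ψ : setL.BoundedFormula Empty 3),
    LevySigma n ψ ∧
    LocallyDefinesCloseInner.{u} θT θφ ∧
    M = locClass Set.univ θφ ∧
    ∀ S : Set ZFSet.{u}, IsInnerModel S → THolds θT S →
      ModelsVeqHOD (locClass S θφ) ∧
      locClass (locClass S θφ) θφ = locClass S θφ ∧
      ∀ γ : setL.BoundedFormula Empty 1, LevySigma 2 γ →
        InnerModelIn S {x | x ∈ S ∧ ZSat S γ ![x]} →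
        CloseTo {x | x ∈ S ∧ ZSat S γ ![x]} S →
        ∃ j : ZFSet → ZFSet,
          IsElem (locClass S θφ) (locClass {x | x ∈ S ∧ ZSat S γ ![x]} θφ) j ∧
          ∀ x y : ZFSet, ((x ∈ locClass S θφ ∧ j x = y) ↔ ZSat S ψ ![natZ (code γ), x, y])

/-- `M` is Σ_n-rigid: there is no nontrivial elementary embedding `j : M → M` whose graph
is definable by a Σ_n formula. -/
def SigmaRigid (n : ℕ) (M : Set ZFSet) : Prop :=
  ¬ ∃ (j : ZFSet → ZFSet) (γ : setL.BoundedFormula Empty 2),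
      LevySigma n γ ∧
      (∀ x y : ZFSet, (x ∈ M ∧ j x = y) ↔ ZSat Set.univ γ ![x, y]) ∧
      IsElem M M j ∧ ∃ x ∈ M, j x ≠ x

/-!
Let `F S` and `G S` be the two candidate core models as computed inside an inner model `S`. The
theory passes to inner models and a locally defined class is `Σ₂`, because membership in it is
witnessed by some `H_μ`; so clause (3), applied inside every `S`, yields uniformly definable
elementary embeddings `j S : F S → F (G S)` and `i S : G S → G (F S)`.

In a model of `V = HOD`, two uniformly definable elementary embeddings into the same smaller inner
model coincide: the least ordinal at which they differ would be definable, and both would send it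
to the ordinal with the same definition in the target. If the embeddings are not definable inside
their domain, their points of agreement still form an elementary submodel.

Suppose `F A = A`, and put `B = G A`. The elementary submodel `X` of `F B` on which `i B` and
`j (F B)` agree contains the image of `j A`. Its Mostowski collapse `π` is onto `B`: if every member
of `y ∈ B` is a value of `π` on `X`, then `y` is the collapse of the set of all `v` which `F B`
computes, by its own version of `π ∘ j`, to be sent into `i B y`; this set lies in `X` because it is
definable from `i B y`, which itself lies in `X`. Hence `A`, `F B`, `X` and `B` are elementarily
equivalent, and since `B` thinks that it equals its own `G`, so does `A`, i.e. `G A = A`.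

Therefore the two models `M` and `N` satisfy `G M = M` and `F N = N`, so `j` and `i` at the universe
are embeddings `M → N → M`. Their composite has a `Σ_n` graph and is the identity by rigidity. Thus
`i : N → M` is onto, hence an isomorphism of transitive classes, and `M = N`.
-/

/-! ### Formulas -/

section Formulas

variable {S : Set ZFSet.{u}} {m n : ℕ}

theorem zSat_ex {φ : setL.BoundedFormula Empty (n + 1)} {v : Fin n → ZFSet} :
    ZSat S φ.ex v ↔ ∃ x ∈ S, ZSat S φ (Fin.snoc v x) := by
  change ¬ (∀ x ∈ S, ¬ ZSat S φ (Fin.snoc v x)) ↔ _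
  push Not
  rfl

/-- The index of the variable that a term of the relational language `setL` consists of. -/
def varIndex : setL.Term (Empty ⊕ Fin n) → Fin n
  | .var (Sum.inl e) => e.elim
  | .var (Sum.inr i) => i
  | .func f _ => f.elim

theorem tval_eq_varIndex (v : Fin n → ZFSet.{u}) : ∀ t, tval v t = v (varIndex t)
  | .var (Sum.inl e) => e.elim
  | .var (Sum.inr _) => rfl
  | .func f _ => f.elim

/-- The extension of a renaming of variables below one quantifier. -/
def liftRenaming (ρ : Fin m → Fin n) : Fin (m + 1) → Fin (n + 1) :=
  Fin.snoc (α := fun _ => Fin (n + 1)) (fun i => (ρ i).castSucc) (Fin.last n)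

theorem snoc_comp_liftRenaming (ρ : Fin m → Fin n) (v : Fin n → ZFSet.{u}) (x : ZFSet) :
    (Fin.snoc v x : Fin (n + 1) → ZFSet) ∘ liftRenaming ρ =
      (Fin.snoc (v ∘ ρ) x : Fin (m + 1) → ZFSet) := by
  funext i
  refine Fin.lastCases ?_ (fun i => ?_) i <;> simp [liftRenaming]

/-- The formula obtained from `φ` by replacing every variable `i` by `ρ i`. -/
def renameVars : ∀ {m n : ℕ}, (Fin m → Fin n) →
    setL.BoundedFormula Empty m → setL.BoundedFormula Empty n
  | _, _, _, .falsum => .falsum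
  | _, _, ρ, .equal t u => .equal (mvar (ρ (varIndex t))) (mvar (ρ (varIndex u)))
  | _, _, ρ, .rel R ts => .rel R fun i => mvar (ρ (varIndex (ts i)))
  | _, _, ρ, .imp φ ψ => .imp (renameVars ρ φ) (renameVars ρ ψ)
  | _, _, ρ, .all φ => .all (renameVars (liftRenaming ρ) φ)

theorem zSat_renameVars (φ : setL.BoundedFormula Empty m) (ρ : Fin m → Fin n)
    (v : Fin n → ZFSet) : ZSat S (renameVars ρ φ) v ↔ ZSat S φ (v ∘ ρ) := by
  induction φ generalizing n with
  | falsum => rfl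
  | equal t u => simp only [renameVars, ZSat, tval_eq_varIndex]; rfl
  | rel R ts => cases R; simp only [renameVars, ZSat, tval_eq_varIndex]; rfl
  | imp φ ψ hφ hψ => simp only [renameVars, ZSat, hφ, hψ]
  | all φ h => simp only [renameVars, ZSat, h, snoc_comp_liftRenaming]

theorem IsDelta0.renameVars {φ : setL.BoundedFormula Empty m} (h : IsDelta0 φ)
    (ρ : Fin m → Fin n) : IsDelta0 (renameVars ρ φ) := by
  induction h generalizing n with
  | falsum => exact .falsum
  | equal t u => exact .equal _ _
  | rel R ts => exact .rel _ _
  | imp _ _ h₁ h₂ => exact .imp (h₁ ρ) (h₂ ρ)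
  | @ball m j φ _ h =>
    have hball : _root_.renameVars ρ (((memF (Fin.last m) j.castSucc).imp φ).all) =
        ((memF (Fin.last n) (ρ j).castSucc).imp
          (_root_.renameVars (liftRenaming ρ) φ)).all := by
      simp only [_root_.renameVars, memF, Relations.boundedFormula₂, Relations.boundedFormula]
      congr 3
      funext i
      fin_cases i <;> simp [varIndex, mvar, liftRenaming]
    rw [hball]
    exact .ball _ (h _)

mutual
theorem LevySigma.renameVars : ∀ {k m : ℕ} {φ : setL.BoundedFormula Empty m},
    LevySigma k φ → ∀ {n : ℕ} (ρ : Fin m → Fin n), LevySigma k (renameVars ρ φ)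
  | _, _, _, .delta0 h, _, ρ => .delta0 (h.renameVars ρ)
  | _, _, _, .ofPi h, _, ρ => .ofPi (h.renameVars ρ)
  | _, _, _, .ex h, _, ρ => .ex (h.renameVars (liftRenaming ρ))
theorem LevyPi.renameVars : ∀ {k m : ℕ} {φ : setL.BoundedFormula Empty m},
    LevyPi k φ → ∀ {n : ℕ} (ρ : Fin m → Fin n), LevyPi k (renameVars ρ φ)
  | _, _, _, .delta0 h, _, ρ => .delta0 (h.renameVars ρ)
  | _, _, _, .ofSigma h, _, ρ => .ofSigma (h.renameVars ρ)
  | _, _, _, .all h, _, ρ => .all (h.renameVars (liftRenaming ρ))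
end

end Formulas

/-! ### Definability in inner models -/

/-- The syntactic classes of formulas by which definability is measured: the Levy classes, and the
class `any` of all formulas. -/
inductive Complexity
  | delta0
  | sigma (k : ℕ)
  | pi (k : ℕ)
  | any

/-- The membership relation between formulas and syntactic classes. -/
def Complexity.Contains {n : ℕ} (φ : setL.BoundedFormula Empty n) : Complexity → Prop
  | .delta0 => IsDelta0 φ
  | .sigma k => LevySigma k φ
  | .pi k => LevyPi k φ
  | .any => True

/-- The syntactic classes closed under propositional connectives and bounded quantification. -/
class Complexity.IsBoolean (Γ : Complexity) : Prop where
  imp {n : ℕ} {φ ψ : setL.BoundedFormula Empty n} :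
    Γ.Contains φ → Γ.Contains ψ → Γ.Contains (φ.imp ψ)
  ball {n : ℕ} (j : Fin n) {φ : setL.BoundedFormula Empty (n + 1)} :
    Γ.Contains φ → Γ.Contains ((memF (Fin.last n) j.castSucc).imp φ).all

instance Complexity.isBoolean_delta0 : Complexity.delta0.IsBoolean := ⟨.imp, .ball⟩

instance Complexity.isBoolean_any : Complexity.any.IsBoolean :=
  ⟨fun _ _ => trivial, fun _ _ _ => trivial⟩

mutual
theorem IsDelta0.levySigma {n : ℕ} {φ : setL.BoundedFormula Empty n} (h : IsDelta0 φ) :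
    ∀ k, LevySigma k φ
  | 0 => .delta0 h
  | k + 1 => .ofPi (h.levyPi k)
theorem IsDelta0.levyPi {n : ℕ} {φ : setL.BoundedFormula Empty n} (h : IsDelta0 φ) :
    ∀ k, LevyPi k φ
  | 0 => .delta0 h
  | k + 1 => .ofSigma (h.levySigma k)
end

theorem IsDelta0.contains {n : ℕ} {φ : setL.BoundedFormula Empty n} (h : IsDelta0 φ) :
    ∀ Γ : Complexity, Γ.Contains φ
  | .delta0 => h
  | .sigma k => h.levySigma k
  | .pi k => h.levyPi k
  | .any => trivial

/-- `P S v` is a property of tuples `v` that is defined, uniformly in all inner models `S`, by a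
single formula of the class `Γ` without parameters. Definability in a concrete case is found by
instance search, which follows the syntax of the property. -/
class Definable (Γ : Complexity) {n : ℕ} (P : Set ZFSet.{u} → (Fin n → ZFSet.{u}) → Prop) :
    Prop where
  exists_formula : ∃ φ : setL.BoundedFormula Empty n, Γ.Contains φ ∧
    ∀ S, IsInnerModel S → ∀ v, (∀ i, v i ∈ S) → (ZSat S φ v ↔ P S v)

theorem IsInnerModel.isTransClass {S : Set ZFSet.{u}} (hS : IsInnerModel S) : IsTransClass S :=
  hS.1.1.1

theorem forall_snoc_mem {S : Set ZFSet.{u}} {n : ℕ} {v : Fin n → ZFSet} (hv : ∀ i, v i ∈ S)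
    {x : ZFSet} (hx : x ∈ S) (i : Fin (n + 1)) :
    (Fin.snoc v x : Fin (n + 1) → ZFSet) i ∈ S := by
  refine Fin.lastCases ?_ (fun i => ?_) i
  · simpa using hx
  · simpa using hv i

theorem snoc_castSucc_last {n : ℕ} (w : Fin (n + 1) → ZFSet.{u}) :
    (Fin.snoc (fun i => w i.castSucc) (w (Fin.last n)) : Fin (n + 1) → ZFSet) = w :=
  Fin.snoc_init_self w

namespace Definable

variable {Γ Γ' : Complexity} {m n : ℕ} {P Q : Set ZFSet.{u} → (Fin n → ZFSet.{u}) → Prop}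
  {R : Set ZFSet.{u} → (Fin n → ZFSet.{u}) → ZFSet.{u} → Prop}

theorem congr (hP : Definable Γ P)
    (h : ∀ S, IsInnerModel S → ∀ v, (∀ i, v i ∈ S) → (Q S v ↔ P S v)) : Definable Γ Q := by
  obtain ⟨φ, hφ, h'⟩ := hP
  exact ⟨φ, hφ, fun S hS v hv => (h' S hS v hv).trans (h S hS v hv).symm⟩

theorem mono (hP : Definable Γ P)
    (h : ∀ φ : setL.BoundedFormula Empty n, Γ.Contains φ → Γ'.Contains φ) : Definable Γ' P := by
  obtain ⟨φ, hφ, h'⟩ := hP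
  exact ⟨φ, h φ hφ, h'⟩

theorem of_delta0 (hP : Definable .delta0 P) : Definable Γ P :=
  hP.mono fun _ hφ => IsDelta0.contains hφ Γ

theorem to_any (hP : Definable Γ P) : Definable .any P :=
  hP.mono fun _ _ => trivial

theorem comp {P : Set ZFSet.{u} → (Fin m → ZFSet.{u}) → Prop} (hP : Definable Γ P)
    (ρ : Fin m → Fin n) : Definable Γ fun S (v : Fin n → ZFSet) => P S fun i => v (ρ i) := by
  obtain ⟨φ, hφ, h⟩ := hP
  refine ⟨renameVars ρ φ, ?_, fun S hS v hv => ?_⟩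
  · cases Γ
    exacts [hφ.renameVars ρ, hφ.renameVars ρ, hφ.renameVars ρ, trivial]
  · rw [zSat_renameVars]
    exact h S hS _ fun i => hv (ρ i)

theorem comp_snoc {P : Set ZFSet.{u} → (Fin (m + 1) → ZFSet.{u}) → Prop} (hP : Definable Γ P)
    (ρ : Fin m → Fin n) (j : Fin n) :
    Definable Γ fun S (v : Fin n → ZFSet) => P S (Fin.snoc (fun i => v (ρ i)) (v j)) :=
  (hP.comp (Fin.snoc ρ j : Fin (m + 1) → Fin n)).congr fun S _ v _ =>
    iff_of_eq (congrArg (P S) (Fin.comp_snoc v ρ j).symm)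

section Boolean

variable [Γ.IsBoolean]

instance falsum : Definable Γ fun (_ : Set ZFSet.{u}) (_ : Fin n → ZFSet) => False :=
  ⟨.falsum, IsDelta0.falsum.contains Γ, fun _ _ _ _ => Iff.rfl⟩

instance mem (i j : Fin n) : Definable Γ fun (_ : Set ZFSet.{u}) v => v i ∈ v j :=
  ⟨memF i j, (IsDelta0.rel _ _).contains Γ, fun _ _ _ _ => Iff.rfl⟩

instance eq (i j : Fin n) : Definable Γ fun (_ : Set ZFSet.{u}) v => v i = v j :=
  ⟨.equal (mvar i) (mvar j), (IsDelta0.equal _ _).contains Γ, fun _ _ _ _ => Iff.rfl⟩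

instance imp [hP : Definable Γ P] [hQ : Definable Γ Q] :
    Definable Γ fun S v => P S v → Q S v := by
  obtain ⟨φ, hφ, h⟩ := hP
  obtain ⟨ψ, hψ, h'⟩ := hQ
  exact ⟨φ.imp ψ, Complexity.IsBoolean.imp hφ hψ,
    fun S hS v hv => imp_congr (h S hS v hv) (h' S hS v hv)⟩

instance not [Definable Γ P] : Definable Γ fun S v => ¬ P S v :=
  (inferInstance : Definable Γ fun S v => P S v → False)

instance and [Definable Γ P] [Definable Γ Q] : Definable Γ fun S v => P S v ∧ Q S v :=
  (inferInstance : Definable Γ fun S v => ¬ (P S v → ¬ Q S v)).congr fun _ _ _ _ => by tauto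

instance or [Definable Γ P] [Definable Γ Q] : Definable Γ fun S v => P S v ∨ Q S v :=
  (inferInstance : Definable Γ fun S v => ¬ P S v → Q S v).congr fun _ _ _ _ => by tauto

instance iff [Definable Γ P] [Definable Γ Q] : Definable Γ fun S v => P S v ↔ Q S v :=
  (inferInstance : Definable Γ fun S v => (P S v → Q S v) ∧ (Q S v → P S v)).congr
    fun _ _ _ _ => iff_iff_implies_and_implies

instance ball (i : Fin n)
    [hR : Definable Γ fun S (w : Fin (n + 1) → ZFSet) =>
      R S (fun k => w k.castSucc) (w (Fin.last n))] :
    Definable Γ fun S v => ∀ x ∈ v i, R S v x := by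
  obtain ⟨φ, hφ, h⟩ := hR
  refine ⟨_, Complexity.IsBoolean.ball i hφ, fun S hS v hv => ?_⟩
  have hx x (hx : x ∈ S) := h S hS (Fin.snoc v x) (forall_snoc_mem hv hx)
  have hmem x : ZSat S (memF (Fin.last n) i.castSucc) (Fin.snoc v x) ↔ x ∈ v i := by
    simp [memF, Relations.boundedFormula₂, Relations.boundedFormula, ZSat, mvar, tval]
  simp only [Fin.snoc_castSucc, Fin.snoc_last] at hx
  simp only [ZSat, hmem]
  exact ⟨fun H x hxi => have hxS := hS.isTransClass _ (hv i) x hxi; (hx x hxS).1 (H x hxS hxi),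
    fun H x hxS hxi => (hx x hxS).2 (H x hxi)⟩

instance bex (i : Fin n)
    [hR : Definable Γ fun S (w : Fin (n + 1) → ZFSet) =>
      R S (fun k => w k.castSucc) (w (Fin.last n))] :
    Definable Γ fun S v => ∃ x ∈ v i, R S v x :=
  (inferInstance : Definable Γ fun S v => ¬ ∀ x ∈ v i, ¬ R S v x).congr
    fun _ _ _ _ => by push Not; rfl

end Boolean

instance zSat (φ : setL.BoundedFormula Empty n) :
    Definable .any fun (S : Set ZFSet.{u}) v => ZSat S φ v :=
  ⟨φ, trivial, fun _ _ _ _ => Iff.rfl⟩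

section Quantifiers

theorem exists_of (hR : Definable Γ fun S (w : Fin (n + 1) → ZFSet) =>
      R S (fun k => w k.castSucc) (w (Fin.last n)))
    (hΓ : ∀ φ : setL.BoundedFormula Empty (n + 1), Γ.Contains φ → Γ'.Contains φ.ex) :
    Definable Γ' fun S v => ∃ x ∈ S, R S v x := by
  obtain ⟨φ, hφ, h⟩ := hR
  refine ⟨φ.ex, hΓ φ hφ, fun S hS v hv => zSat_ex.trans (exists_congr fun x => ?_)⟩
  refine and_congr_right fun hx => (h S hS _ (forall_snoc_mem hv hx)).trans ?_
  simp only [Fin.snoc_castSucc, Fin.snoc_last]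

theorem forall_of (hR : Definable Γ fun S (w : Fin (n + 1) → ZFSet) =>
      R S (fun k => w k.castSucc) (w (Fin.last n)))
    (hΓ : ∀ φ : setL.BoundedFormula Empty (n + 1), Γ.Contains φ → Γ'.Contains φ.all) :
    Definable Γ' fun S v => ∀ x ∈ S, R S v x := by
  obtain ⟨φ, hφ, h⟩ := hR
  refine ⟨φ.all, hΓ φ hφ, fun S hS v hv => forall₂_congr fun x hx => ?_⟩
  refine (h S hS _ (forall_snoc_mem hv hx)).trans ?_
  simp only [Fin.snoc_castSucc, Fin.snoc_last]

instance ex [hR : Definable .any fun S (w : Fin (n + 1) → ZFSet) =>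
      R S (fun k => w k.castSucc) (w (Fin.last n))] :
    Definable .any fun S v => ∃ x ∈ S, R S v x :=
  exists_of hR fun _ _ => trivial

instance all [hR : Definable .any fun S (w : Fin (n + 1) → ZFSet) =>
      R S (fun k => w k.castSucc) (w (Fin.last n))] :
    Definable .any fun S v => ∀ x ∈ S, R S v x :=
  forall_of hR fun _ _ => trivial

instance sigma_ex {k : ℕ} [hR : Definable (.sigma (k + 1)) fun S (w : Fin (n + 1) → ZFSet) =>
      R S (fun k => w k.castSucc) (w (Fin.last n))] :
    Definable (.sigma (k + 1)) fun S v => ∃ x ∈ S, R S v x :=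
  exists_of hR fun _ => .ex

instance pi_all {k : ℕ} [hR : Definable (.pi (k + 1)) fun S (w : Fin (n + 1) → ZFSet) =>
      R S (fun k => w k.castSucc) (w (Fin.last n))] :
    Definable (.pi (k + 1)) fun S v => ∀ x ∈ S, R S v x :=
  forall_of hR fun _ => .all

end Quantifiers

section Levy

instance (priority := high) sigma_of_delta0 {k : ℕ} [hP : Definable .delta0 P] :
    Definable (.sigma k) P := hP.of_delta0

instance (priority := high) pi_of_delta0 {k : ℕ} [hP : Definable .delta0 P] :
    Definable (.pi k) P := hP.of_delta0

instance (priority := low) sigma_of_pi {k : ℕ} [hP : Definable (.pi k) P] :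
    Definable (.sigma (k + 1)) P := hP.mono fun _ => .ofPi

instance (priority := low) pi_of_sigma {k : ℕ} [hP : Definable (.sigma k) P] :
    Definable (.pi (k + 1)) P := hP.mono fun _ => .ofSigma

theorem sigma_of_formula {k : ℕ} {φ : setL.BoundedFormula Empty n} (hφ : LevySigma k φ) :
    Definable (.sigma k) fun (S : Set ZFSet.{u}) v => ZSat S φ v :=
  ⟨φ, hφ, fun _ _ _ _ => Iff.rfl⟩

theorem pi_of_formula {k : ℕ} {φ : setL.BoundedFormula Empty n} (hφ : LevyPi k φ) :
    Definable (.pi k) fun (S : Set ZFSet.{u}) v => ZSat S φ v :=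
  ⟨φ, hφ, fun _ _ _ _ => Iff.rfl⟩

theorem zSat_sigma_and {k : ℕ}
    (h : ∀ {n : ℕ} {P Q : Set ZFSet.{u} → (Fin n → ZFSet) → Prop}, Definable (.pi k) P →
      Definable Γ Q → Definable (.sigma (k + 1)) fun S v => P S v ∧ Q S v) :
    ∀ {n : ℕ} {φ : setL.BoundedFormula Empty n}, LevySigma (k + 1) φ →
      ∀ {Q : Set ZFSet.{u} → (Fin n → ZFSet) → Prop}, Definable Γ Q →
        Definable (.sigma (k + 1)) fun S v => ZSat S φ v ∧ Q S v
  | _, _, .ofPi hφ, _, hQ => h (pi_of_formula hφ) hQ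
  | n, _, .ex (φ := φ) hφ, Q, hQ => by
    have ih : Definable (.sigma (k + 1)) fun S (w : Fin (n + 1) → ZFSet) =>
        ZSat S φ w ∧ Q S fun i => w i.castSucc := zSat_sigma_and h hφ (hQ.comp Fin.castSucc)
    refine (exists_of (R := fun S v x => ZSat S φ (Fin.snoc v x) ∧ Q S v)
      (Γ := .sigma (k + 1)) (Γ' := .sigma (k + 1))
      (by simpa only [snoc_castSucc_last] using ih) fun _ => .ex).congr fun S _ v _ => ?_
    simp only [zSat_ex, ← exists_and_right, and_assoc]

theorem zSat_pi_and {k : ℕ}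
    (h : ∀ {n : ℕ} {P Q : Set ZFSet.{u} → (Fin n → ZFSet) → Prop}, Definable (.sigma k) P →
      Definable Γ Q → Definable (.pi (k + 1)) fun S v => P S v ∧ Q S v) :
    ∀ {n : ℕ} {φ : setL.BoundedFormula Empty n}, LevyPi (k + 1) φ →
      ∀ {Q : Set ZFSet.{u} → (Fin n → ZFSet) → Prop}, Definable Γ Q →
        Definable (.pi (k + 1)) fun S v => ZSat S φ v ∧ Q S v
  | _, _, .ofSigma hφ, _, hQ => h (sigma_of_formula hφ) hQ
  | n, _, .all (φ := φ) hφ, Q, hQ => by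
    have ih : Definable (.pi (k + 1)) fun S (w : Fin (n + 1) → ZFSet) =>
        ZSat S φ w ∧ Q S fun i => w i.castSucc := zSat_pi_and h hφ (hQ.comp Fin.castSucc)
    refine (forall_of (R := fun S v x => ZSat S φ (Fin.snoc v x) ∧ Q S v)
      (Γ := .pi (k + 1)) (Γ' := .pi (k + 1))
      (by simpa only [snoc_castSucc_last] using ih) fun _ => .all).congr fun S hS v _ => ?_
    exact ⟨fun H x hx => ⟨H.1 x hx, H.2⟩, fun H => ⟨fun x hx => (H x hx).1, (H ∅ hS.1.1.2.1).2⟩⟩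

theorem sigma_and_of {k : ℕ}
    (h : ∀ {n : ℕ} {P Q : Set ZFSet.{u} → (Fin n → ZFSet) → Prop}, Definable (.pi k) P →
      Definable Γ Q → Definable (.sigma (k + 1)) fun S v => P S v ∧ Q S v)
    (hP : Definable (.sigma (k + 1)) P) (hQ : Definable Γ Q) :
    Definable (.sigma (k + 1)) fun S v => P S v ∧ Q S v := by
  obtain ⟨φ, hφ, hφP⟩ := hP
  exact (zSat_sigma_and h hφ hQ).congr fun S hS v hv => by rw [hφP S hS v hv]

theorem pi_and_of {k : ℕ}
    (h : ∀ {n : ℕ} {P Q : Set ZFSet.{u} → (Fin n → ZFSet) → Prop}, Definable (.sigma k) P →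
      Definable Γ Q → Definable (.pi (k + 1)) fun S v => P S v ∧ Q S v)
    (hP : Definable (.pi (k + 1)) P) (hQ : Definable Γ Q) :
    Definable (.pi (k + 1)) fun S v => P S v ∧ Q S v := by
  obtain ⟨φ, hφ, hφP⟩ := hP
  exact (zSat_pi_and h hφ hQ).congr fun S hS v hv => by rw [hφP S hS v hv]

theorem and_comm (h : Definable Γ fun S v => P S v ∧ Q S v) :
    Definable Γ fun S v => Q S v ∧ P S v :=
  h.congr fun _ _ _ _ => _root_.and_comm

theorem levy_and (k : ℕ) : ∀ {n : ℕ} {P Q : Set ZFSet.{u} → (Fin n → ZFSet) → Prop},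
    (Definable (.sigma k) P → Definable (.sigma k) Q →
      Definable (.sigma k) fun S v => P S v ∧ Q S v) ∧
    (Definable (.pi k) P → Definable (.pi k) Q → Definable (.pi k) fun S v => P S v ∧ Q S v) := by
  induction k with
  | zero =>
    refine fun {n P Q} => ⟨fun hP hQ => ?_, fun hP hQ => ?_⟩
    · have hP' : Definable .delta0 P := hP.mono fun | _, .delta0 h => h
      have hQ' : Definable .delta0 Q := hQ.mono fun | _, .delta0 h => h
      infer_instance
    · have hP' : Definable .delta0 P := hP.mono fun | _, .delta0 h => h
      have hQ' : Definable .delta0 Q := hQ.mono fun | _, .delta0 h => h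
      infer_instance
  | succ k ih =>
    exact fun {n P Q} => ⟨
      sigma_and_of fun hP hQ =>
        (sigma_and_of (fun hQ hP => sigma_of_pi (hP := ih.2 hQ hP)) hQ hP).and_comm,
      pi_and_of fun hP hQ =>
        (pi_and_of (fun hQ hP => pi_of_sigma (hP := ih.1 hQ hP)) hQ hP).and_comm⟩

instance sigma_and {k : ℕ} [hP : Definable (.sigma k) P] [hQ : Definable (.sigma k) Q] :
    Definable (.sigma k) fun S v => P S v ∧ Q S v := (levy_and k).1 hP hQ

instance pi_and {k : ℕ} [hP : Definable (.pi k) P] [hQ : Definable (.pi k) Q] :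
    Definable (.pi k) fun S v => P S v ∧ Q S v := (levy_and k).2 hP hQ

end Levy

section SetTheory

variable [Γ.IsBoolean]

instance subset (i j : Fin n) : Definable Γ fun (_ : Set ZFSet.{u}) v => v i ⊆ v j :=
  (inferInstance : Definable Γ fun _ v => ∀ x ∈ v i, x ∈ v j).congr fun _ _ _ _ => Iff.rfl

instance isTransitive (i : Fin n) : Definable Γ fun (_ : Set ZFSet.{u}) v => (v i).IsTransitive :=
  (inferInstance : Definable Γ fun _ v => ∀ x ∈ v i, x ⊆ v i).congr fun _ _ _ _ => Iff.rfl

instance isOrdinal (i : Fin n) : Definable Γ fun (_ : Set ZFSet.{u}) v => (v i).IsOrdinal :=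
  (inferInstance : Definable Γ fun _ v => (v i).IsTransitive ∧ ∀ x ∈ v i, x.IsTransitive).congr
    fun _ _ _ _ => ZFSet.isOrdinal_iff_forall_mem_isTransitive

instance eq_upair (i j k : Fin n) :
    Definable Γ fun (_ : Set ZFSet.{u}) v => v i = ({v j, v k} : ZFSet) :=
  (inferInstance : Definable Γ fun _ v => (∀ x ∈ v i, x = v j ∨ x = v k) ∧
    v j ∈ v i ∧ v k ∈ v i).congr fun _ _ v _ => by
      refine ⟨fun h => by simp [h], fun ⟨h, hj, hk⟩ => ?_⟩
      ext z
      exact ⟨fun hz => ZFSet.mem_pair.2 (h z hz), fun hz => by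
        rcases ZFSet.mem_pair.1 hz with rfl | rfl <;> assumption⟩

instance eq_pair (i j k : Fin n) :
    Definable Γ fun (_ : Set ZFSet.{u}) v => v i = ZFSet.pair (v j) (v k) :=
  (inferInstance : Definable Γ fun _ v =>
    ∃ x ∈ v i, x = ({v j, v j} : ZFSet) ∧ ∃ y ∈ v i, y = ({v j, v k} : ZFSet) ∧
      v i = ({x, y} : ZFSet)).congr fun _ _ v _ => by
      simp only [ZFSet.pair_eq_singleton]
      constructor
      · intro h
        exact ⟨{v j}, by simp [h, ZFSet.pair], rfl, {v j, v k}, by simp [h, ZFSet.pair], rfl, h⟩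
      · rintro ⟨_, -, rfl, _, -, rfl, h⟩
        exact h

instance pair_mem (i j k : Fin n) :
    Definable Γ fun (_ : Set ZFSet.{u}) v => ZFSet.pair (v i) (v j) ∈ v k :=
  (inferInstance : Definable Γ fun _ v => ∃ p ∈ v k, p = ZFSet.pair (v i) (v j)).congr
    fun _ _ _ _ => by simp

end SetTheory

end Definable

/-! ### Closure properties of inner models -/

namespace IsInnerModel

variable {S : Set ZFSet.{u}} (hS : IsInnerModel S) {a b x y : ZFSet.{u}} {n : ℕ}

include hS

theorem mem_of_mem (hy : y ∈ S) (hx : x ∈ y) : x ∈ S := hS.isTransClass y hy x hx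

theorem empty_mem : (∅ : ZFSet) ∈ S := hS.1.1.2.1

theorem unordered_pair_mem (hx : x ∈ S) (hy : y ∈ S) : ({x, y} : ZFSet) ∈ S :=
  hS.1.1.2.2.1 x hx y hy

theorem singleton_mem (hx : x ∈ S) : ({x} : ZFSet) ∈ S := by
  simpa using hS.unordered_pair_mem hx hx

theorem pair_mem (hx : x ∈ S) (hy : y ∈ S) : ZFSet.pair x y ∈ S :=
  hS.unordered_pair_mem (hS.singleton_mem hx) (hS.unordered_pair_mem hx hy)

theorem mem_of_pair_mem (hb : b ∈ S) (h : ZFSet.pair x y ∈ b) : x ∈ S ∧ y ∈ S := by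
  have hxy : ({x, y} : ZFSet) ∈ S :=
    hS.mem_of_mem (hS.mem_of_mem hb h) (by simp [ZFSet.pair])
  exact ⟨hS.mem_of_mem hxy (by simp), hS.mem_of_mem hxy (by simp)⟩

theorem sUnion_mem (hx : x ∈ S) : (ZFSet.sUnion x : ZFSet) ∈ S := hS.1.1.2.2.2.1 x hx

theorem union_mem (hx : x ∈ S) (hy : y ∈ S) : x ∪ y ∈ S :=
  hS.sUnion_mem (hS.unordered_pair_mem hx hy)

theorem insert_mem (hx : x ∈ S) (hy : y ∈ S) : (insert x y : ZFSet) ∈ S := by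
  convert hS.union_mem (hS.singleton_mem hx) hy using 1
  ext; simp

theorem omega_mem : ZFSet.omega ∈ S := hS.1.1.2.2.2.2.1

theorem exists_powerset (hx : x ∈ S) : ∃ p ∈ S, ∀ y, y ∈ p ↔ y ∈ S ∧ y ⊆ x := hS.1.2 x hx

theorem separation (P : Set ZFSet.{u} → (Fin (n + 1) → ZFSet) → Prop) [hP : Definable .any P]
    {p : Fin n → ZFSet} (hp : ∀ i, p i ∈ S) (ha : a ∈ S) :
    ∃ b ∈ S, ∀ y, y ∈ b ↔ y ∈ a ∧ P S (Fin.snoc p y) := by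
  obtain ⟨φ, -, hφ⟩ := hP
  obtain ⟨b, hb, h⟩ := hS.1.1.2.2.2.2.2.1 n φ p hp a ha
  refine ⟨b, hb, fun y => (h y).trans (and_congr_right fun hy => ?_)⟩
  exact hφ S hS _ (forall_snoc_mem hp (hS.mem_of_mem ha hy))

theorem replacement (P : Set ZFSet.{u} → (Fin (n + 2) → ZFSet) → Prop) [hP : Definable .any P]
    {p : Fin n → ZFSet} (hp : ∀ i, p i ∈ S) (ha : a ∈ S)
    (hfun : ∀ x ∈ a, ∀ y ∈ S, ∀ y' ∈ S, P S (Fin.snoc (Fin.snoc p x : Fin (n + 1) → ZFSet) y) →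
      P S (Fin.snoc (Fin.snoc p x : Fin (n + 1) → ZFSet) y') → y = y') :
    ∃ b ∈ S, ∀ y, y ∈ b ↔
      ∃ x ∈ a, y ∈ S ∧ P S (Fin.snoc (Fin.snoc p x : Fin (n + 1) → ZFSet) y) := by
  have hP' : Definable .any fun S (w : Fin (n + 1) → ZFSet) => ∃ y ∈ S, P S (Fin.snoc w y) :=
    Definable.ex (R := fun S w y => P S (Fin.snoc w y))
      (hR := by simpa only [snoc_castSucc_last] using hP)
  obtain ⟨d, hd, hdom⟩ := hS.separation _ (hP := hP') hp ha
  obtain ⟨φ, -, hφ⟩ := hP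
  have hφ' x (hx : x ∈ d) y (hy : y ∈ S) :
      ZSat S φ (Fin.snoc (Fin.snoc p x : Fin (n + 1) → ZFSet) y) ↔
        P S (Fin.snoc (Fin.snoc p x : Fin (n + 1) → ZFSet) y) :=
    hφ S hS _ (forall_snoc_mem (forall_snoc_mem hp (hS.mem_of_mem hd hx)) hy)
  obtain ⟨b, hb, h⟩ := hS.1.1.2.2.2.2.2.2.1 n φ p hp d hd fun x hx => by
    obtain ⟨hxa, y, hy, hPy⟩ := (hdom x).1 hx
    exact ⟨y, ⟨hy, (hφ' x hx y hy).2 hPy⟩, fun y' ⟨hy', hPy'⟩ =>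
      hfun x hxa y' hy' y hy ((hφ' x hx y' hy').1 hPy') hPy⟩
  refine ⟨b, hb, fun y => (h y).trans ⟨?_, ?_⟩⟩
  · rintro ⟨x, hx, hy, hPy⟩
    exact ⟨x, ((hdom x).1 hx).1, hy, (hφ' x hx y hy).1 hPy⟩
  · rintro ⟨x, hx, hy, hPy⟩
    have hxd : x ∈ d := (hdom x).2 ⟨hx, y, hy, hPy⟩
    exact ⟨x, hxd, hy, (hφ' x hxd y hy).2 hPy⟩

theorem prod_mem (ha : a ∈ S) (hb : b ∈ S) : ZFSet.prod a b ∈ S := by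
  obtain ⟨q, hq, hq'⟩ := hS.exists_powerset (hS.union_mem ha hb)
  obtain ⟨r, hr, hr'⟩ := hS.exists_powerset hq
  obtain ⟨c, hc, h⟩ := hS.separation (P := fun _ v => ∃ x ∈ v 0, ∃ y ∈ v 1, v 2 = ZFSet.pair x y)
    (p := ![a, b]) (Fin.forall_fin_two.2 ⟨ha, hb⟩) hr
  suffices ZFSet.prod a b = c from this ▸ hc
  ext z
  refine ZFSet.mem_prod.trans <| .trans ?_ (h z).symm
  refine ⟨fun hz => ⟨?_, hz⟩, fun hz => hz.2⟩
  obtain ⟨x, hx, y, hy, rfl⟩ := hz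
  have hxS := hS.mem_of_mem ha hx
  have hyS := hS.mem_of_mem hb hy
  refine (hr' _).2 ⟨hS.pair_mem hxS hyS, fun w hw => (hq' w).2 ?_⟩
  refine ⟨hS.mem_of_mem (hS.pair_mem hxS hyS) hw, fun v hv => ?_⟩
  obtain rfl | rfl : w = {x} ∨ w = {x, y} := by simpa [ZFSet.pair] using hw
  all_goals simp only [ZFSet.mem_singleton, ZFSet.mem_pair] at hv
  · exact ZFSet.mem_union.2 (.inl (hv ▸ hx))
  · rcases hv with rfl | rfl
    exacts [ZFSet.mem_union.2 (.inl hx), ZFSet.mem_union.2 (.inr hy)]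

theorem exists_isTransClosureOf (hx : x ∈ S) : ∃ t ∈ S, IsTransClosureOf t x := by
  induction x using ZFSet.inductionOn with | h x ih =>
  obtain ⟨b, hb, h⟩ : ∃ b ∈ S, ∀ t, t ∈ b ↔ ∃ y ∈ x, t ∈ S ∧ y ⊆ t ∧ t.IsTransitive ∧
      ∀ u ∈ S, y ⊆ u → u.IsTransitive → t ⊆ u :=
    hS.replacement (P := fun S (v : Fin 2 → _) => v 0 ⊆ v 1 ∧ (v 1).IsTransitive ∧
        ∀ u ∈ S, v 0 ⊆ u → u.IsTransitive → v 1 ⊆ u) (p := ![]) (by simp) hx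
      fun _ _ t ht t' ht' ⟨h₁, h₂, h₃⟩ ⟨h₁', h₂', h₃'⟩ =>
        (h₃ t' ht' h₁' h₂').antisymm (h₃' t ht h₁ h₂)
  refine ⟨x ∪ ZFSet.sUnion b, hS.union_mem hx (hS.sUnion_mem hb),
    fun z hz => ZFSet.mem_union.2 (.inl hz), fun y hy z hz => ?_, fun u hxu hu z hz => ?_⟩
  · refine ZFSet.mem_union.2 (.inr (ZFSet.mem_sUnion.2 ?_))
    rcases ZFSet.mem_union.1 hy with hy | hy
    · obtain ⟨t, ht, h₁, h₂, h₃⟩ := ih y hy (hS.mem_of_mem hx hy)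
      exact ⟨t, (h t).2 ⟨y, hy, ht, h₁, h₂, fun u _ => h₃ u⟩, h₁ hz⟩
    · obtain ⟨t, ht, hyt⟩ := ZFSet.mem_sUnion.1 hy
      obtain ⟨-, -, -, -, htrans, -⟩ := (h t).1 ht
      exact ⟨t, ht, htrans y hyt hz⟩
  · rcases ZFSet.mem_union.1 hz with hz | hz
    · exact hxu hz
    obtain ⟨t, ht, hzt⟩ := ZFSet.mem_sUnion.1 hz
    obtain ⟨y, hy, -, -, -, hmin⟩ := (h t).1 ht
    obtain ⟨t', ht', h₁, h₂, h₃⟩ := ih y hy (hS.mem_of_mem hx hy)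
    exact h₃ u (hu y (hxu hy)) hu (hmin t' ht' h₁ h₂ hzt)

end IsInnerModel

/-! ### Points of agreement of elementary embeddings -/

/-- The class of members of `A` on which `f` and `g` agree. -/
def eqLocus (A : Set ZFSet.{u}) (f g : ZFSet.{u} → ZFSet.{u}) : Set ZFSet.{u} :=
  {x | x ∈ A ∧ f x = g x}

namespace IsElem

variable {A B C : Set ZFSet.{u}} {f g : ZFSet.{u} → ZFSet.{u}} {m n : ℕ} {x y : ZFSet.{u}}

theorem comp (hf : IsElem A B f) (hg : IsElem B C g) : IsElem A C fun x => g (f x) :=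
  ⟨fun x hx => hg.1 _ (hf.1 x hx), fun n φ v hv =>
    (hf.2 n φ v hv).trans (hg.2 n φ _ fun i => hf.1 _ (hv i))⟩

theorem mem_iff (hf : IsElem A B f) (hx : x ∈ A) (hy : y ∈ A) : x ∈ y ↔ f x ∈ f y :=
  hf.2 2 (memF 0 1) ![x, y] (Fin.forall_fin_two.2 ⟨hx, hy⟩)

theorem injOn (hf : IsElem A B f) : Set.InjOn f A := fun x hx y hy =>
  (hf.2 2 (.equal (mvar 0) (mvar 1)) ![x, y] (Fin.forall_fin_two.2 ⟨hx, hy⟩)).2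

theorem transfer (hf : IsElem A B f) (hA : IsInnerModel A) (hB : IsInnerModel B)
    (P : Set ZFSet.{u} → (Fin n → ZFSet) → Prop) [hP : Definable .any P] {v : Fin n → ZFSet}
    (hv : ∀ i, v i ∈ A) : P A v ↔ P B fun i => f (v i) := by
  obtain ⟨φ, -, hφ⟩ := hP
  rw [← hφ A hA v hv, ← hφ B hB _ fun i => hf.1 _ (hv i)]
  exact hf.2 n φ v hv

theorem comp_snoc_eq (f : ZFSet.{u} → ZFSet.{u}) (p : Fin n → ZFSet) (x : ZFSet) :
    (fun i => f ((Fin.snoc p x : Fin (n + 1) → ZFSet) i)) =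
      (Fin.snoc (fun i => f (p i)) (f x) : Fin (n + 1) → ZFSet) :=
  Fin.comp_snoc f p x

section Agreement

variable (hA : IsInnerModel A) (hB : IsInnerModel B) (hf : IsElem A B f) (hg : IsElem A B g)

include hA hB hf hg

theorem mem_eqLocus_of_definable (P : Set ZFSet.{u} → (Fin (n + 1) → ZFSet) → Prop)
    [hP : Definable .any P] {p : Fin n → ZFSet} (hp : ∀ i, p i ∈ eqLocus A f g) (hx : x ∈ A)
    (hPx : P A (Fin.snoc p x)) (huniq : ∀ y ∈ A, P A (Fin.snoc p y) → y = x) :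
    x ∈ eqLocus A f g := by
  have hQ : Definable .any fun S (w : Fin (n + 1) → ZFSet) =>
      ∀ y ∈ S, P S (Fin.snoc (fun i => w i.castSucc) y) → y = w (Fin.last n) := by
    have := hP.comp_snoc (fun i : Fin n => i.castSucc.castSucc) (Fin.last (n + 1))
    infer_instance
  have hpx := forall_snoc_mem (fun i => (hp i).1) hx
  have huniqB := (hf.transfer hA hB _ (hP := hQ) hpx).1 (by simpa using huniq)
  have hgx := (hg.transfer hA hB P hpx).1 hPx
  simp only [comp_snoc_eq, ← (hp _).2, Fin.snoc_castSucc, Fin.snoc_last] at huniqB hgx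
  exact ⟨hx, (huniqB _ (hg.1 x hx) hgx).symm⟩

theorem exists_isOrdinal_mem_eqLocus (P : Set ZFSet.{u} → (Fin (n + 1) → ZFSet) → Prop)
    [hP : Definable .any P] {p : Fin n → ZFSet} (hp : ∀ i, p i ∈ eqLocus A f g)
    (hx : x ∈ A) (hxo : x.IsOrdinal) (hPx : P A (Fin.snoc p x)) :
    ∃ y ∈ eqLocus A f g, y.IsOrdinal ∧ P A (Fin.snoc p y) := by
  obtain ⟨y, ⟨hy, hyo, hPy⟩, hmin⟩ := ZFSet.mem_wf.has_min
    {y | y ∈ A ∧ y.IsOrdinal ∧ P A (Fin.snoc p y)} ⟨x, hx, hxo, hPx⟩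
  refine ⟨y, ?_, hyo, hPy⟩
  have := hP.comp_snoc (fun i : Fin n => i.castSucc.castSucc) (Fin.last (n + 1))
  refine mem_eqLocus_of_definable hA hB hf hg (fun S w => (w (Fin.last n)).IsOrdinal ∧ P S w ∧
    ∀ z ∈ w (Fin.last n), ¬ P S (Fin.snoc (fun i => w i.castSucc) z)) hp hy ?_ fun z hz h => ?_
  · simp only [Fin.snoc_last, Fin.snoc_castSucc]
    exact ⟨hyo, hPy, fun z hz hPz => hmin z ⟨hA.mem_of_mem hy hz, hyo.mem hz, hPz⟩ hz⟩
  · simp only [Fin.snoc_last, Fin.snoc_castSucc] at h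
    obtain ⟨hzo, hPz, hzmin⟩ := h
    rcases hzo.mem_trichotomous hyo with hzy | hzy | hyz
    exacts [absurd hzy (hmin z ⟨hz, hzo, hPz⟩), hzy, absurd hPy (hzmin y hyz)]

-- A least ordinal of disagreement would be definable, hence a point of agreement.
theorem eqOn_of_definable_disagreement (hH : ModelsVeqHOD A) (R : Set ZFSet.{u} → ZFSet → Prop)
    [hR : Definable .any fun S (v : Fin 1 → ZFSet) => R S (v 0)]
    (h : ∀ x ∈ A, R A x ↔ f x ≠ g x) : Set.EqOn f g A := by
  have hord x (hx : x ∈ A) (hxo : x.IsOrdinal) : x ∈ eqLocus A f g := by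
    refine ⟨hx, by_contra fun hne => ?_⟩
    obtain ⟨y, ⟨hy, hfy⟩, -, hRy⟩ := exists_isOrdinal_mem_eqLocus hA hB hf hg (n := 0) _
      (hP := hR) (p := ![]) (by simp) hx hxo ((h x hx).2 hne)
    exact (h y hy).1 hRy hfy
  intro x hx
  obtain ⟨n, φ, p, hp, hφ⟩ := hH x hx
  exact (mem_eqLocus_of_definable hA hB hf hg (fun S => ZSat S φ)
    (fun i => hord _ (hp i).1 (hp i).2) hx ((hφ x hx).2 rfl) fun y hy => (hφ y hy).1).2

theorem exists_ordinals_mem_eqLocus {e : Fin n → ZFSet} (he : ∀ i, e i ∈ eqLocus A f g) :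
    ∀ {m : ℕ} {P : Set ZFSet.{u} → (Fin (n + m) → ZFSet) → Prop}, Definable .any P → ∀
      {p : Fin m → ZFSet}, (∀ i, p i ∈ A ∧ (p i).IsOrdinal) → P A (Fin.append e p) →
      ∃ q : Fin m → ZFSet, (∀ i, q i ∈ eqLocus A f g) ∧ P A (Fin.append e q)
  | 0, _, _, p, _, hPp => ⟨p, fun i => i.elim0, hPp⟩
  | m + 1, P, hP, p, hp, hPp => by
    have hQ : Definable .any fun S (w : Fin (n + m) → ZFSet) =>
        ∃ x ∈ S, x.IsOrdinal ∧ P S (Fin.snoc w x) := by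
      have : Definable .any fun S (w : Fin (n + m + 1) → ZFSet) =>
          P S (Fin.snoc (fun i => w i.castSucc) (w (Fin.last (n + m)))) :=
        hP.congr fun S _ w _ => iff_of_eq (congrArg (P S) (snoc_castSucc_last w))
      infer_instance
    obtain ⟨q, hq, x, hx, hxo, hPx⟩ := exists_ordinals_mem_eqLocus he hQ (p := Fin.init p)
      (fun i => hp i.castSucc) ⟨p (Fin.last m), (hp _).1, (hp _).2, by
        rwa [← Fin.append_snoc, Fin.snoc_init_self]⟩
    obtain ⟨y, hy, -, hPy⟩ := exists_isOrdinal_mem_eqLocus hA hB hf hg P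
      (fun i => Fin.addCases (by simpa using he) (by simpa using hq) i) hx hxo hPx
    exact ⟨Fin.snoc q y, forall_snoc_mem hq hy, by rwa [Fin.append_snoc]⟩

theorem exists_mem_eqLocus (hH : ModelsVeqHOD A)
    (P : Set ZFSet.{u} → (Fin (n + 1) → ZFSet) → Prop) [hP : Definable .any P]
    {e : Fin n → ZFSet} (he : ∀ i, e i ∈ eqLocus A f g) (hx : x ∈ A) (hPx : P A (Fin.snoc e x)) :
    ∃ y ∈ eqLocus A f g, P A (Fin.snoc e y) := by
  obtain ⟨m, φ, p, hp, hφ⟩ := hH x hx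
  have hQ : Definable .any fun S (w : Fin (n + m) → ZFSet) => ∃ x ∈ S,
      P S (Fin.snoc (fun i => w (Fin.castAdd m i)) x) ∧
      ∀ y ∈ S, ZSat S φ (Fin.snoc (fun i => w (Fin.natAdd n i)) y) ↔ y = x := by
    have := hP.comp_snoc (fun i : Fin n => (Fin.castAdd m i).castSucc) (Fin.last (n + m))
    have := (Definable.zSat.{u} φ).comp_snoc (fun i : Fin m => (Fin.natAdd n i).castSucc.castSucc)
      (Fin.last (n + m + 1))
    infer_instance
  obtain ⟨q, hq, y, hy, hPy, hdef⟩ := exists_ordinals_mem_eqLocus hA hB hf hg he hQ hp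
    ⟨x, hx, by simpa using hPx, by simpa using hφ⟩
  simp only [Fin.append_left, Fin.append_right] at hPy hdef
  exact ⟨y, mem_eqLocus_of_definable hA hB hf hg (fun S => ZSat S φ) hq hy ((hdef y hy).2 rfl)
    fun z hz => (hdef z hz).1, hPy⟩

theorem isElem_eqLocus (hH : ModelsVeqHOD A) : IsElem (eqLocus A f g) A id := by
  refine ⟨fun _ hx => hx.1, fun n φ => ?_⟩
  change ∀ v : Fin n → ZFSet, _ → (_ ↔ ZSat A φ v)
  induction φ with
  | falsum => exact fun _ _ => Iff.rfl
  | equal t u => exact fun _ _ => Iff.rfl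
  | rel R ts => cases R; exact fun _ _ => Iff.rfl
  | imp φ ψ hφ hψ => exact fun v hv => imp_congr (hφ v hv) (hψ v hv)
  | all φ ih =>
    refine fun v hv => ⟨fun H => by_contra fun hn => ?_, fun H x hx =>
      (ih _ (forall_snoc_mem hv hx)).2 (H x hx.1)⟩
    obtain ⟨x, hx, hφ⟩ : ∃ x ∈ A, ¬ ZSat A φ (Fin.snoc v x) := by
      simpa only [ZSat, not_forall, exists_prop] using hn
    obtain ⟨y, hy, hφy⟩ := exists_mem_eqLocus hA hB hf hg hH (fun S v => ¬ ZSat S φ v) hv hx hφ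
    exact hφy ((ih _ (forall_snoc_mem hv hy)).1 (H y hy))

end Agreement

end IsElem

/-! ### The Mostowski collapse -/

/-- The class `E S` is defined, uniformly in all inner models `S`, by a single formula without
parameters. -/
class UniformlyDefinable (E : Set ZFSet.{u} → Set ZFSet.{u}) : Prop where
  definable : Definable .any fun S (v : Fin 1 → ZFSet) => v 0 ∈ E S

instance Definable.mem_class {E : Set ZFSet.{u} → Set ZFSet.{u}} [h : UniformlyDefinable E]
    {n : ℕ} (i : Fin n) : Definable .any fun S v => v i ∈ E S :=
  h.definable.comp fun _ => i

/-- The Mostowski collapse of the class `X`, extended to all sets: `w` is sent to the set of the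
collapses of its members in `X`. -/
noncomputable def collapse (X : Set ZFSet.{u}) : ZFSet.{u} → ZFSet.{u} :=
  ZFSet.mem_wf.fix fun w rec =>
    ZFSet.range fun v : (ZFSet.sep (· ∈ X) w : ZFSet) => rec v (ZFSet.mem_sep.1 v.2).1

theorem mem_collapse {X : Set ZFSet.{u}} {w z : ZFSet.{u}} :
    z ∈ collapse X w ↔ ∃ v ∈ w, v ∈ X ∧ z = collapse X v := by
  rw [collapse, ZFSet.mem_wf.fix_eq]
  simp only [ZFSet.mem_range, Subtype.exists, ZFSet.mem_sep, exists_prop, and_assoc,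
    eq_comm (a := z)]

theorem collapse_injOn {X : Set ZFSet.{u}}
    (hext : ∀ v ∈ X, ∀ w ∈ X, (∀ u ∈ X, u ∈ v ↔ u ∈ w) → v = w) : X.InjOn (collapse X) := by
  intro w hw
  induction w using ZFSet.inductionOn with | h w ih =>
  intro w' hw' h
  refine hext w hw w' hw' fun u hu => ⟨fun huw => ?_, fun huw => ?_⟩
  · obtain ⟨v, hv, hvX, huv⟩ := mem_collapse.1 (h ▸ mem_collapse.2 ⟨u, huw, hu, rfl⟩)
    rwa [ih u huw hu hvX huv]
  · obtain ⟨v, hv, hvX, huv⟩ := mem_collapse.1 (h ▸ mem_collapse.2 ⟨u, huw, hu, rfl⟩)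
    rwa [← ih v hv hvX hu huv.symm]

/-- `f` is a set-sized partial computation of the Mostowski collapse of `X`: it obeys the recursion
at every argument, and its domain is closed under passing to members in `X`. -/
def IsCollapseAttempt (X : Set ZFSet.{u}) (f : ZFSet.{u}) : Prop :=
  ∀ u z, ZFSet.pair u z ∈ f → (∀ y ∈ z, ∃ v ∈ u, v ∈ X ∧ ZFSet.pair v y ∈ f) ∧
    ∀ v ∈ u, v ∈ X → ∃ y ∈ z, ZFSet.pair v y ∈ f

namespace IsCollapseAttempt

variable {X : Set ZFSet.{u}} {f u z : ZFSet.{u}}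

theorem eq_collapse (hf : IsCollapseAttempt X f) (h : ZFSet.pair u z ∈ f) :
    z = collapse X u := by
  induction u using ZFSet.inductionOn generalizing z with | h u ih =>
  ext y
  refine ⟨fun hy => ?_, fun hy => ?_⟩
  · obtain ⟨v, hv, hvX, hvy⟩ := (hf u z h).1 y hy
    exact mem_collapse.2 ⟨v, hv, hvX, ih v hv hvy⟩
  · obtain ⟨v, hv, hvX, rfl⟩ := mem_collapse.1 hy
    obtain ⟨y, hy, hvy⟩ := (hf u z h).2 v hv hvX
    rwa [← ih v hv hvy]

theorem insert (hf : IsCollapseAttempt X f)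
    (hu : ∀ v ∈ u, v ∈ X → ZFSet.pair v (collapse X v) ∈ f) :
    IsCollapseAttempt X (insert (ZFSet.pair u (collapse X u)) f) := by
  intro w z hwz
  rcases ZFSet.mem_insert_iff.1 hwz with h | h
  · obtain ⟨rfl, rfl⟩ := ZFSet.pair_injective h
    refine ⟨fun y hy => ?_, fun v hv hvX => ?_⟩
    · obtain ⟨v, hv, hvX, rfl⟩ := mem_collapse.1 hy
      exact ⟨v, hv, hvX, ZFSet.mem_insert_of_mem _ (hu v hv hvX)⟩
    · exact ⟨_, mem_collapse.2 ⟨v, hv, hvX, rfl⟩, ZFSet.mem_insert_of_mem _ (hu v hv hvX)⟩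
  · refine ⟨fun y hy => ?_, fun v hv hvX => ?_⟩
    · obtain ⟨v, hv, hvX, hvy⟩ := (hf w z h).1 y hy
      exact ⟨v, hv, hvX, ZFSet.mem_insert_of_mem _ hvy⟩
    · obtain ⟨y, hy, hvy⟩ := (hf w z h).2 v hv hvX
      exact ⟨y, hy, ZFSet.mem_insert_of_mem _ hvy⟩

end IsCollapseAttempt

section CollapseInInnerModels

variable (E : Set ZFSet.{u} → Set ZFSet.{u}) [UniformlyDefinable E] {n : ℕ}

instance Definable.isCollapseAttempt (i : Fin n) :
    Definable .any fun S v => IsCollapseAttempt (E S) (v i) :=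
  (inferInstance : Definable .any fun S v => ∀ u ∈ S, ∀ z ∈ S, ZFSet.pair u z ∈ v i →
    (∀ y ∈ z, ∃ x ∈ u, x ∈ E S ∧ ZFSet.pair x y ∈ v i) ∧
      ∀ x ∈ u, x ∈ E S → ∃ y ∈ z, ZFSet.pair x y ∈ v i).congr fun _ hS _ hv =>
    ⟨fun h u _ z _ => h u z, fun h u z huz =>
      h u (hS.mem_of_pair_mem (hv i) huz).1 z (hS.mem_of_pair_mem (hv i) huz).2 huz⟩

variable {S : Set ZFSet.{u}} (hS : IsInnerModel S) {t w : ZFSet.{u}}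

include hS

theorem exists_largest_collapseAttempt (ht : t ∈ S) (htrans : t.IsTransitive) :
    ∃ g ∈ S, IsCollapseAttempt (E S) g ∧ ∀ u ∈ t, ∀ f ∈ S, IsCollapseAttempt (E S) f →
      ∀ z, ZFSet.pair u z ∈ f → ZFSet.pair u z ∈ g := by
  obtain ⟨g, hg, hgm⟩ : ∃ g ∈ S, ∀ p, p ∈ g ↔ ∃ u ∈ t, p ∈ S ∧ ∃ f ∈ S,
      IsCollapseAttempt (E S) f ∧ p ∈ f ∧ ∃ z ∈ S, p = ZFSet.pair u z :=
    hS.replacement (P := fun S (v : Fin 2 → _) => ∃ f ∈ S, IsCollapseAttempt (E S) f ∧ v 1 ∈ f ∧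
        ∃ z ∈ S, v 1 = ZFSet.pair (v 0) z) (p := ![]) (by simp) ht
      fun x _ y _ y' _ ⟨f, _, hf, (hyf : y ∈ f), z, _, (hy : y = ZFSet.pair x z)⟩
          ⟨f', _, hf', (hyf' : y' ∈ f'), z', _, (hy' : y' = ZFSet.pair x z')⟩ => by
        subst hy hy'
        rw [hf.eq_collapse hyf, hf'.eq_collapse hyf']
  have hgu u (hu : u ∈ t) f (hf : f ∈ S) (hfX : IsCollapseAttempt (E S) f) z
      (huz : ZFSet.pair u z ∈ f) : ZFSet.pair u z ∈ g :=
    (hgm _).2 ⟨u, hu, hS.mem_of_mem hf huz, f, hf, hfX, huz, z, (hS.mem_of_pair_mem hf huz).2, rfl⟩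
  refine ⟨g, hg, fun u z huz => ?_, hgu⟩
  obtain ⟨u', hu', -, f, hf, hfX, huf, z', -, h⟩ := (hgm _).1 huz
  obtain ⟨rfl, rfl⟩ := ZFSet.pair_injective h
  refine ⟨fun y hy => ?_, fun v hv hvX => ?_⟩
  · obtain ⟨v, hv, hvX, hvy⟩ := (hfX u z huf).1 y hy
    exact ⟨v, hv, hvX, hgu v (htrans.mem_trans hv hu') f hf hfX y hvy⟩
  · obtain ⟨y, hy, hvy⟩ := (hfX u z huf).2 v hv hvX
    exact ⟨y, hy, hgu v (htrans.mem_trans hv hu') f hf hfX y hvy⟩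

theorem exists_collapseAttempt (hw : w ∈ S) :
    ∃ f ∈ S, IsCollapseAttempt (E S) f ∧ ZFSet.pair w (collapse (E S) w) ∈ f := by
  induction w using ZFSet.inductionOn with | h w ih =>
  obtain ⟨t, ht, hwt, htrans, -⟩ := hS.exists_isTransClosureOf hw
  obtain ⟨g, hg, hgX, hgmax⟩ := exists_largest_collapseAttempt E hS ht htrans
  have hgw v (hv : v ∈ w) : ZFSet.pair v (collapse (E S) v) ∈ g := by
    obtain ⟨f, hf, hfX, hvf⟩ := ih v hv (hS.mem_of_mem hw hv)
    exact hgmax v (hwt hv) f hf hfX _ hvf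
  obtain ⟨c, hc, hcm⟩ : ∃ c ∈ S, ∀ z, z ∈ c ↔ ∃ v ∈ w, z ∈ S ∧ v ∈ E S ∧ ZFSet.pair v z ∈ g :=
    hS.replacement (P := fun S (v : Fin 3 → _) => v 1 ∈ E S ∧ ZFSet.pair (v 1) (v 2) ∈ v 0)
      (p := ![g]) (by simpa using hg) hw fun v _ z _ z' _ h h' =>
      (hgX.eq_collapse h.2).trans (hgX.eq_collapse h'.2).symm
  have hcw : collapse (E S) w = c := by
    ext z
    rw [mem_collapse, hcm]
    refine exists_congr fun v => and_congr_right fun hv => ?_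
    constructor
    · rintro ⟨hvX, rfl⟩
      exact ⟨(hS.mem_of_pair_mem hg (hgw v hv)).2, hvX, hgw v hv⟩
    · exact fun h => ⟨h.2.1, hgX.eq_collapse h.2.2⟩
  refine ⟨insert (ZFSet.pair w (collapse (E S) w)) g, ?_, hgX.insert fun v hv _ => hgw v hv,
    ZFSet.mem_insert _ _⟩
  exact hS.insert_mem (hS.pair_mem hw (hcw ▸ hc)) hg

theorem collapse_mem (hw : w ∈ S) : collapse (E S) w ∈ S := by
  obtain ⟨f, hf, -, h⟩ := exists_collapseAttempt E hS hw
  exact (hS.mem_of_pair_mem hf h).2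

omit hS in
instance Definable.eq_collapse (i j : Fin n) :
    Definable .any fun S v => v j = collapse (E S) (v i) :=
  (inferInstance : Definable .any fun S v => ∃ f ∈ S, IsCollapseAttempt (E S) f ∧
    ZFSet.pair (v i) (v j) ∈ f).congr fun S hS v hv => by
    refine ⟨fun h => ?_, fun ⟨f, _, hfX, h⟩ => hfX.eq_collapse h⟩
    rw [h]
    exact exists_collapseAttempt E hS (hv i)

end CollapseInInnerModels

theorem isElem_of_mem_iso {X Y : Set ZFSet.{u}} {π : ZFSet.{u} → ZFSet.{u}}
    (hπ : Set.BijOn π X Y) (hmem : ∀ x ∈ X, ∀ y ∈ X, x ∈ y ↔ π x ∈ π y) : IsElem X Y π := by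
  refine ⟨hπ.mapsTo, fun n φ => ?_⟩
  induction φ with
  | falsum => exact fun _ _ => Iff.rfl
  | equal t u =>
    intro v hv
    simp only [ZSat, tval_eq_varIndex]
    exact (hπ.injOn.eq_iff (hv _) (hv _)).symm
  | rel R ts =>
    cases R
    intro v hv
    simp only [ZSat, tval_eq_varIndex]
    exact hmem _ (hv _) _ (hv _)
  | imp φ ψ hφ hψ => exact fun v hv => imp_congr (hφ v hv) (hψ v hv)
  | all φ ih =>
    refine fun v hv => ⟨fun H y hy => ?_, fun H x hx => ?_⟩
    · obtain ⟨x, hx, rfl⟩ := hπ.surjOn hy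
      rw [← IsElem.comp_snoc_eq]
      exact (ih _ (forall_snoc_mem hv hx)).1 (H x hx)
    · rw [ih _ (forall_snoc_mem hv hx), IsElem.comp_snoc_eq]
      exact H _ (hπ.mapsTo hx)

/-! ### Uniformly definable operators -/

/-- A uniformly definable operator assigning to every inner model `S` an inner model `F S ⊆ S`. -/
class InnerModelOperator (F : Set ZFSet.{u} → Set ZFSet.{u}) : Prop
    extends UniformlyDefinable F where
  subset {S : Set ZFSet.{u}} : IsInnerModel S → F S ⊆ S
  isInnerModel {S : Set ZFSet.{u}} : IsInnerModel S → IsInnerModel (F S)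

/-- The maps `j S`, restricted to the classes `F S`, are defined uniformly in all inner models `S`
by a single formula without parameters. -/
class UniformlyDefinableMap (F : Set ZFSet.{u} → Set ZFSet.{u})
    (j : Set ZFSet.{u} → ZFSet.{u} → ZFSet.{u}) : Prop where
  definable_graph : Definable .any fun S (v : Fin 2 → ZFSet) => v 0 ∈ F S ∧ j S (v 0) = v 1

section Operators

variable {F G : Set ZFSet.{u} → Set ZFSet.{u}} {i j : Set ZFSet.{u} → ZFSet.{u} → ZFSet.{u}}
  {A B C : Set ZFSet.{u}} {f g : ZFSet.{u} → ZFSet.{u}} {n : ℕ}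

instance Definable.forall_fin {m : ℕ} {P : Fin m → Set ZFSet.{u} → (Fin n → ZFSet) → Prop}
    [h : ∀ i, Definable .any (P i)] : Definable .any fun S v => ∀ i, P i S v := by
  induction m with
  | zero => exact (inferInstance : Definable .any fun _ _ => ¬ False).congr fun _ _ _ _ => by simp
  | succ m ih =>
    exact (inferInstance : Definable .any fun S v => P 0 S v ∧ ∀ i : Fin m, P i.succ S v).congr
      fun _ _ _ _ => Fin.forall_fin_succ

instance Definable.map_graph [h : UniformlyDefinableMap F j] (k l : Fin n) :
    Definable .any fun S v => v k ∈ F S ∧ j S (v k) = v l :=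
  h.definable_graph.comp ![k, l]

namespace InnerModelOperator

theorem definable_zSat [hF : InnerModelOperator F] :
    ∀ {n : ℕ} (φ : setL.BoundedFormula Empty n), Definable .any fun S v => ZSat (F S) φ v
  | _, .falsum => Definable.falsum
  | _, .equal t u => (Definable.zSat (.equal t u)).congr fun _ _ _ _ => Iff.rfl
  | _, .rel .mem ts => (Definable.zSat (.rel .mem ts)).congr fun _ _ _ _ => Iff.rfl
  | _, .imp φ ψ => Definable.imp (hP := definable_zSat φ) (hQ := definable_zSat ψ)
  | n, .all φ => by
    have : Definable .any fun S (w : Fin (n + 1) → ZFSet) =>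
        ZSat (F S) φ (Fin.snoc (fun i => w i.castSucc) (w (Fin.last n))) := by
      simpa only [snoc_castSucc_last] using definable_zSat φ
    exact (inferInstance : Definable .any fun S v =>
      ∀ x ∈ S, x ∈ F S → ZSat (F S) φ (Fin.snoc v x)).congr fun S hS v _ =>
        ⟨fun h x _ hx => h x hx, fun h x hx => h x (hF.subset hS hx) hx⟩

theorem definable_relativize [hF : InnerModelOperator F]
    {P : Set ZFSet.{u} → (Fin n → ZFSet) → Prop} (hP : Definable .any P) :
    Definable .any fun S v => (∀ i, v i ∈ F S) ∧ P (F S) v := by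
  obtain ⟨φ, -, hφ⟩ := hP
  have := definable_zSat (F := F) φ
  exact (inferInstance : Definable .any fun S v => (∀ i, v i ∈ F S) ∧ ZSat (F S) φ v).congr
    fun S hS v _ => and_congr_right fun hv => (hφ _ (hF.isInnerModel hS) v hv).symm

theorem self : InnerModelOperator fun S : Set ZFSet.{u} => S where
  definable := (inferInstance : Definable .any fun _ _ => ¬ False).congr fun _ _ _ hv =>
    iff_of_true (hv 0) not_false
  subset _ := subset_rfl
  isInnerModel := id

theorem comp [hG : InnerModelOperator G] [hF : InnerModelOperator F] :
    InnerModelOperator fun S => F (G S) where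
  definable := (definable_relativize (F := G) hF.definable).congr fun _ hS _ _ =>
    ⟨fun h => ⟨Fin.forall_fin_one.2 (hF.subset (hG.isInnerModel hS) h), h⟩, And.right⟩
  subset hS := (hF.subset (hG.isInnerModel hS)).trans (hG.subset hS)
  isInnerModel hS := hF.isInnerModel (hG.isInnerModel hS)

end InnerModelOperator

theorem IsElem.restrict (hf : IsElem A B f) (hA : IsInnerModel A) (hB : IsInnerModel B)
    (F : Set ZFSet.{u} → Set ZFSet.{u}) [hF : InnerModelOperator F] :
    IsElem (F A) (F B) f :=
  ⟨fun x hx => (hf.transfer hA hB (fun S (v : Fin 1 → _) => v 0 ∈ F S) (v := ![x])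
      (Fin.forall_fin_one.2 (hF.subset hA hx))).1 hx,
    fun _ φ _ hv => hf.transfer hA hB _ (hP := InnerModelOperator.definable_zSat φ)
      fun i => hF.subset hA (hv i)⟩

namespace UniformlyDefinableMap

theorem comp [UniformlyDefinableMap F j] [hG : InnerModelOperator G] [UniformlyDefinableMap G i]
    (h : ∀ S, IsInnerModel S → ∀ x ∈ F S, j S x ∈ G S) :
    UniformlyDefinableMap F fun S x => i S (j S x) where
  definable_graph := (inferInstance : Definable .any fun S (v : Fin 2 → _) =>
    ∃ y ∈ S, (v 0 ∈ F S ∧ j S (v 0) = y) ∧ y ∈ G S ∧ i S y = v 1).congr fun S hS _ _ =>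
      ⟨fun ⟨hv, hy⟩ => ⟨_, hG.subset hS (h S hS _ hv), ⟨hv, rfl⟩, h S hS _ hv, hy⟩,
        fun ⟨_, _, ⟨hv, hy⟩, _, hz⟩ => ⟨hv, hy ▸ hz⟩⟩

theorem relativize [hG : InnerModelOperator G] [hF : InnerModelOperator F]
    [hj : UniformlyDefinableMap F j] (h : ∀ S, IsInnerModel S → ∀ x ∈ F S, j S x ∈ S) :
    UniformlyDefinableMap (fun S => F (G S)) fun S => j (G S) where
  definable_graph := (InnerModelOperator.definable_relativize (F := G) hj.definable_graph).congr
    fun _ hS _ _ => ⟨fun hv => ⟨Fin.forall_fin_two.2 ⟨hF.subset (hG.isInnerModel hS) hv.1,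
      hv.2 ▸ h _ (hG.isInnerModel hS) _ hv.1⟩, hv⟩, And.right⟩

theorem restrict [UniformlyDefinableMap F j] [UniformlyDefinable G]
    (h : ∀ S, IsInnerModel S → G S ⊆ F S) : UniformlyDefinableMap G j where
  definable_graph := (inferInstance : Definable .any fun S (v : Fin 2 → _) =>
    v 0 ∈ G S ∧ v 0 ∈ F S ∧ j S (v 0) = v 1).congr fun S hS _ _ =>
      ⟨fun ⟨hv, hy⟩ => ⟨hv, h S hS hv, hy⟩, fun ⟨hv, _, hy⟩ => ⟨hv, hy⟩⟩

theorem eqOn [hi : UniformlyDefinableMap F i] [hj : UniformlyDefinableMap F j]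
    (hA : IsInnerModel A) (hB : IsInnerModel B) (hBA : B ⊆ A) (hFA : F A = A)
    (hH : ModelsVeqHOD A) (hiA : IsElem A B (i A)) (hjA : IsElem A B (j A)) :
    Set.EqOn (i A) (j A) A :=
  IsElem.eqOn_of_definable_disagreement hA hB hiA hjA hH
    (fun S x => ∃ y ∈ S, ∃ z ∈ S, (x ∈ F S ∧ i S x = y) ∧ (x ∈ F S ∧ j S x = z) ∧ ¬ y = z)
    fun x hx => by
      rw [hFA]
      constructor
      · rintro ⟨y, -, z, -, ⟨-, rfl⟩, ⟨-, rfl⟩, hne⟩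
        exact hne
      · exact fun hne => ⟨_, hBA (hiA.1 x hx), _, hBA (hjA.1 x hx), ⟨hx, rfl⟩, ⟨hx, rfl⟩, hne⟩

end UniformlyDefinableMap

end Operators

/-! ### Mutual embeddings -/

theorem IsTransClass.eq_of_forall_mem_iff {S : Set ZFSet.{u}} (hS : IsTransClass S)
    {v w : ZFSet.{u}} (hv : v ∈ S) (hw : w ∈ S) (h : ∀ u ∈ S, u ∈ v ↔ u ∈ w) : v = w :=
  ZFSet.ext fun u => ⟨fun hu => (h u (hS v hv u hu)).1 hu, fun hu => (h u (hS w hw u hu)).2 hu⟩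

theorem IsElem.subset_of_forall_mem {X Y : Set ZFSet.{u}} (h : IsElem X Y id) (hY : IsTransClass Y)
    {v w : ZFSet} (hv : v ∈ X) (hw : w ∈ X) (hvw : ∀ u ∈ X, u ∈ v → u ∈ w) : v ⊆ w := by
  have hsat (S : Set ZFSet.{u}) (v w : ZFSet) :
      ZSat S (.all (.imp (memF 2 0) (memF 2 1))) ![v, w] ↔ ∀ u ∈ S, u ∈ v → u ∈ w := Iff.rfl
  have hvw' := (h.2 2 _ ![v, w] (Fin.forall_fin_two.2 ⟨hv, hw⟩)).1 ((hsat X v w).2 hvw)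
  exact fun u hu => hvw' u (hY v (h.1 v hv) u hu) hu

/-- Two uniformly definable operators `F` and `G` of core-model type, together with uniformly
definable elementary embeddings `j S : F S → F (G S)` and `i S : G S → G (F S)`. -/
structure MutualEmbeddings (F G : Set ZFSet.{u} → Set ZFSet.{u})
    (j i : Set ZFSet.{u} → ZFSet.{u} → ZFSet.{u}) : Prop where
  operator_left : InnerModelOperator F
  operator_right : InnerModelOperator G
  idem_left {S : Set ZFSet.{u}} : IsInnerModel S → F (F S) = F S
  idem_right {S : Set ZFSet.{u}} : IsInnerModel S → G (G S) = G S
  vEqHOD_left {S : Set ZFSet.{u}} : IsInnerModel S → ModelsVeqHOD (F S)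
  vEqHOD_right {S : Set ZFSet.{u}} : IsInnerModel S → ModelsVeqHOD (G S)
  isElem_left {S : Set ZFSet.{u}} : IsInnerModel S → IsElem (F S) (F (G S)) (j S)
  isElem_right {S : Set ZFSet.{u}} : IsInnerModel S → IsElem (G S) (G (F S)) (i S)
  definableMap_left : UniformlyDefinableMap F j
  definableMap_right : UniformlyDefinableMap G i

/-- The points of `F (F S)` at which the embeddings `i S` and `j (F S)` agree. -/
def agreement (F G : Set ZFSet.{u} → Set ZFSet.{u}) (j i : Set ZFSet.{u} → ZFSet.{u} → ZFSet.{u})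
    (S : Set ZFSet.{u}) : Set ZFSet.{u} :=
  eqLocus (G S ∩ F (F S)) (i S) (j (F S))

/-- The composite of `j S` with the collapse of the class of points of agreement at `G S`. -/
noncomputable def collapseMap (F G : Set ZFSet.{u} → Set ZFSet.{u})
    (j i : Set ZFSet.{u} → ZFSet.{u} → ZFSet.{u}) (S : Set ZFSet.{u}) (x : ZFSet.{u}) : ZFSet.{u} :=
  collapse (agreement F G j i (G S)) (j S x)

namespace MutualEmbeddings

variable {F G : Set ZFSet.{u} → Set ZFSet.{u}} {j i : Set ZFSet.{u} → ZFSet.{u} → ZFSet.{u}}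
  {A B S : Set ZFSet.{u}} {w y : ZFSet.{u}}

theorem symm (h : MutualEmbeddings F G j i) : MutualEmbeddings G F i j :=
  ⟨h.operator_right, h.operator_left, h.idem_right, h.idem_left, h.vEqHOD_right, h.vEqHOD_left,
    h.isElem_right, h.isElem_left, h.definableMap_right, h.definableMap_left⟩

variable (h : MutualEmbeddings F G j i)

include h

theorem isInnerModel_left (hS : IsInnerModel S) : IsInnerModel (F S) :=
  h.operator_left.isInnerModel hS

theorem isInnerModel_right (hS : IsInnerModel S) : IsInnerModel (G S) :=
  h.operator_right.isInnerModel hS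

theorem subset_left (hS : IsInnerModel S) : F S ⊆ S := h.operator_left.subset hS

theorem subset_right (hS : IsInnerModel S) : G S ⊆ S := h.operator_right.subset hS

theorem map_left_mem (S) (hS : IsInnerModel S) (x) (hx : x ∈ F S) : j S x ∈ S :=
  h.subset_right hS (h.subset_left (h.isInnerModel_right hS) ((h.isElem_left hS).1 x hx))

theorem uniformlyDefinable_agreement : UniformlyDefinable (agreement F G j i) where
  definable := by
    have := h.operator_left
    have := h.definableMap_left
    have := h.definableMap_right
    have := UniformlyDefinableMap.relativize (G := F) h.map_left_mem
    refine (inferInstance : Definable .any fun S (v : Fin 1 → _) => ∃ y ∈ S,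
      (v 0 ∈ G S ∧ i S (v 0) = y) ∧ v 0 ∈ F (F S) ∧ j (F S) (v 0) = y).congr
        fun S hS v _ => ⟨fun ⟨⟨hvG, hvF⟩, hv⟩ => ?_, ?_⟩
    · exact ⟨_, h.symm.map_left_mem S hS _ hvG, ⟨hvG, rfl⟩, hvF, hv.symm⟩
    · rintro ⟨y, -, ⟨hvG, rfl⟩, hvF, hv⟩
      exact ⟨⟨hvG, hvF⟩, hv.symm⟩

theorem agreement_eq_eqLocus (hB : IsInnerModel B) (hGB : G B = B) :
    agreement F G j i B = eqLocus (F B) (i B) (j (F B)) := by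
  rw [agreement, hGB, h.idem_left hB, Set.inter_eq_right.2 (h.subset_left hB)]

theorem uniformlyDefinableMap_right_left :
    UniformlyDefinableMap F fun S x => i (G S) (j S x) := by
  have := h.operator_left
  have := h.operator_right
  have := h.definableMap_left
  have := h.definableMap_right
  have := InnerModelOperator.comp (F := F) (G := G)
  have := UniformlyDefinableMap.relativize (G := G) h.symm.map_left_mem
  have : UniformlyDefinableMap (fun S => F (G S)) fun S => i (G S) :=
    .restrict (F := fun S => G (G S)) fun S hS => by
      simpa only [h.idem_right hS] using h.subset_left (h.isInnerModel_right hS)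
  exact .comp fun S hS => (h.isElem_left hS).1

theorem uniformlyDefinableMap_left_left :
    UniformlyDefinableMap F fun S x => j (F (G S)) (j S x) := by
  have := h.operator_left
  have := h.operator_right
  have := h.definableMap_left
  have := InnerModelOperator.comp (F := F) (G := G)
  have := UniformlyDefinableMap.relativize (G := fun S => F (G S)) h.map_left_mem
  have : UniformlyDefinableMap (fun S => F (G S)) fun S => j (F (G S)) :=
    .restrict (F := fun S => F (F (G S))) fun S hS => (h.idem_left (h.isInnerModel_right hS)).ge
  exact .comp fun S hS => (h.isElem_left hS).1

theorem map_left_mem_agreement (hA : IsInnerModel A) (hFA : F A = A) {x : ZFSet} (hx : x ∈ A) :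
    j A x ∈ agreement F G j i (G A) := by
  have := h.operator_left
  have hN := h.isInnerModel_right hA
  have hK := h.isInnerModel_left hN
  have hK' := h.isInnerModel_right hK
  have hjA : IsElem A (F (G A)) (j A) := by simpa only [hFA] using h.isElem_left hA
  have hiN : IsElem (F (G A)) (F (G (F (G A)))) (i (G A)) := by
    simpa only [h.idem_right hA] using (h.isElem_right hN).restrict
      (h.isInnerModel_right hN) (h.isInnerModel_right hK) F
  have hjK : IsElem (F (G A)) (F (G (F (G A)))) (j (F (G A))) := by
    simpa only [h.idem_left hN] using h.isElem_left hK
  rw [h.agreement_eq_eqLocus hN (h.idem_right hA)]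
  refine ⟨hjA.1 x hx, UniformlyDefinableMap.eqOn (hi := h.uniformlyDefinableMap_right_left)
    (hj := h.uniformlyDefinableMap_left_left) hA (h.isInnerModel_left hK') ?_ hFA
    (hFA ▸ h.vEqHOD_left hA) (hjA.comp hiN) (hjA.comp hjK) hx⟩
  exact (h.subset_left hK').trans <| (h.subset_right hK).trans <| (h.subset_left hN).trans <|
    h.subset_right hA

section Collapse

variable (hB : IsInnerModel B) (hGB : G B = B)

include hB hGB

theorem isElem_right_of_eq : IsElem B (G (F B)) (i B) := by
  simpa only [hGB] using h.isElem_right hB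

omit hGB in
theorem isElem_left_left : IsElem (F B) (F (G (F B))) (j (F B)) := by
  simpa only [h.idem_left hB] using h.isElem_left (h.isInnerModel_left hB)

theorem isElem_left_right : IsElem (F B) (F (G (F B))) (i B) :=
  (h.isElem_right_of_eq hB hGB).restrict hB (h.isInnerModel_right (h.isInnerModel_left hB)) F
    (hF := h.operator_left)

theorem isElem_agreement : IsElem (agreement F G j i B) (F B) id := by
  rw [h.agreement_eq_eqLocus hB hGB]
  exact IsElem.isElem_eqLocus (h.isInnerModel_left hB)
    (h.isInnerModel_left (h.isInnerModel_right (h.isInnerModel_left hB)))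
    (h.isElem_left_right hB hGB) (h.isElem_left_left hB) (h.vEqHOD_left hB)

theorem collapse_agreement_injOn :
    (agreement F G j i B).InjOn (collapse (agreement F G j i B)) := by
  have hE := h.isElem_agreement hB hGB
  have hK := (h.isInnerModel_left hB).isTransClass
  exact collapse_injOn fun v hv w hw hvw =>
    (hE.subset_of_forall_mem hK hv hw fun u hu => (hvw u hu).1).antisymm
      (hE.subset_of_forall_mem hK hw hv fun u hu => (hvw u hu).2)

omit hB hGB in
theorem uniformlyDefinableMap_collapseMap : UniformlyDefinableMap F (collapseMap F G j i) := by
  have := h.operator_left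
  have := h.operator_right
  have := h.definableMap_left
  have := h.uniformlyDefinable_agreement
  have := InnerModelOperator.self.{u}
  have : UniformlyDefinableMap (fun S => S) fun S => collapse (agreement F G j i S) :=
    ⟨(Definable.eq_collapse (agreement F G j i) 0 1).congr fun _ _ _ hv =>
      (and_iff_right (hv 0)).trans eq_comm⟩
  have := UniformlyDefinableMap.relativize (G := G) (F := fun S => S) fun S hS x hx =>
    collapse_mem (agreement F G j i) hS hx
  exact .comp (j := j) (G := G) (i := fun S => collapse (agreement F G j i (G S))) fun S hS x hx =>
    h.subset_left (h.isInnerModel_right hS) ((h.isElem_left hS).1 x hx)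

theorem exists_preimage_mem (hy : y ∈ B) : ∃ w ∈ F B, ∀ v, v ∈ w ↔ ∃ u ∈ i B y, v ∈ F (F B) ∧
    collapseMap F G j i (F B) v = u := by
  have := h.uniformlyDefinableMap_collapseMap
  have hK := h.isInnerModel_left hB
  have hKK := h.idem_left hB
  have hN := h.isInnerModel_right hK
  have hiy : i B y ∈ F B := h.subset_right hK ((h.isElem_right_of_eq hB hGB).1 y hy)
  obtain ⟨w, hw, hwm⟩ : ∃ w ∈ F B, ∀ v, v ∈ w ↔ ∃ u ∈ i B y, v ∈ F B ∧ v ∈ F (F B) ∧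
      collapseMap F G j i (F B) v = u :=
    hK.replacement (P := fun S (v : Fin 2 → _) => v 1 ∈ F S ∧
        collapseMap F G j i S (v 1) = v 0) (p := ![]) (by simp) hiy
      fun u _ v hv v' hv' ⟨_, hu⟩ ⟨_, hu'⟩ => (h.isElem_left_left hB).injOn hv hv' <|
        h.collapse_agreement_injOn hN (h.idem_right hK)
          (h.map_left_mem_agreement hK hKK hv) (h.map_left_mem_agreement hK hKK hv')
          (hu.trans hu'.symm)
  exact ⟨w, hw, fun v => (hwm v).trans <| exists_congr fun u => and_congr_right fun _ =>
    and_iff_right_of_imp fun hv => hKK ▸ hv.1⟩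

theorem map_right_map_right (hy : y ∈ B) : i B (i B y) = j (F B) (i B y) := by
  have := h.definableMap_right
  have hy' := h.symm.map_left_mem_agreement hB hGB hy
  have hiB := h.isElem_right_of_eq hB hGB
  have hK := h.isInnerModel_left hB
  have hN := h.isInnerModel_right hK
  rw [h.symm.agreement_eq_eqLocus hK (h.idem_left hB)] at hy'
  refine .trans ?_ hy'.2.symm
  have hiy : i B y ∈ B := h.subset_left hB (h.subset_right hK (hiB.1 y hy))
  exact ((hiB.transfer hB hN (fun S (v : Fin 2 → _) => v 0 ∈ G S ∧ i S (v 0) = v 1)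
    (v := ![y, i B y]) (Fin.forall_fin_two.2 ⟨hy, hiy⟩)).1 ⟨hGB.ge hy, rfl⟩).2.symm

theorem preimage_mem_agreement (hy : y ∈ B) (hw : w ∈ F B)
    (hwm : ∀ v, v ∈ w ↔ ∃ u ∈ i B y, v ∈ F (F B) ∧
      collapseMap F G j i (F B) v = u) :
    w ∈ agreement F G j i B := by
  have := h.uniformlyDefinableMap_collapseMap
  have hK := h.isInnerModel_left hB
  have hN := h.isInnerModel_right hK
  have hK' := h.isInnerModel_left hN
  have hiy : i B y ∈ F B := h.subset_right hK ((h.isElem_right_of_eq hB hGB).1 y hy)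
  have hvw {f} (hf : IsElem (F B) (F (G (F B))) f) (v) (hv : v ∈ F (G (F B))) :=
    (hf.transfer hK hK' (fun S (p : Fin 2 → _) => ∀ v ∈ S, v ∈ p 0 ↔ ∃ u ∈ p 1, v ∈ F S ∧
      collapseMap F G j i S v = u) (v := ![w, i B y])
      (Fin.forall_fin_two.2 ⟨hw, hiy⟩)).1 (fun v _ => hwm v) v hv
  have hi := h.isElem_left_right hB hGB
  have hj := h.isElem_left_left hB
  rw [h.agreement_eq_eqLocus hB hGB]
  refine ⟨hw, hK'.isTransClass.eq_of_forall_mem_iff (hi.1 w hw) (hj.1 w hw) fun v hv => ?_⟩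
  have hiv := hvw hi v hv
  have hjv := hvw hj v hv
  simp only [Matrix.cons_val_zero, Matrix.cons_val_one] at hiv hjv
  rw [hiv, hjv, h.map_right_map_right hB hGB hy]

theorem collapse_map_right (hw : w ∈ B) : collapse (agreement F G j i (G (F B))) (i B w) =
    i B (collapse (agreement F G j i B) w) := by
  have := h.uniformlyDefinable_agreement
  have hcw := collapse_mem (agreement F G j i) hB hw
  exact (((h.isElem_right_of_eq hB hGB).transfer hB
    (h.isInnerModel_right (h.isInnerModel_left hB))
    (fun S (v : Fin 2 → _) => v 1 = collapse (agreement F G j i S) (v 0))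
    (v := ![w, collapse (agreement F G j i B) w]) (Fin.forall_fin_two.2 ⟨hw, hcw⟩)).1 rfl).symm

theorem exists_collapse_agreement_eq (hy : y ∈ B) :
    ∃ w ∈ agreement F G j i B, collapse (agreement F G j i B) w = y := by
  induction y using ZFSet.inductionOn with | h y ih =>
  have := h.uniformlyDefinable_agreement
  obtain ⟨w, hw, hwm⟩ := h.exists_preimage_mem hB hGB hy
  have hwE := h.preimage_mem_agreement hB hGB hy hw hwm
  have hmem v (hv : v ∈ agreement F G j i B) :
      v ∈ w ↔ collapse (agreement F G j i B) v ∈ y := by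
    have hvK : v ∈ F B := (h.isElem_agreement hB hGB).1 v hv
    have hvB := h.subset_left hB hvK
    have hcv : collapseMap F G j i (F B) v = i B (collapse (agreement F G j i B) v) := by
      rw [← h.collapse_map_right hB hGB hvB, hv.2, collapseMap]
    rw [hwm, (h.isElem_right_of_eq hB hGB).mem_iff (collapse_mem _ hB hvB) hy, ← hcv]
    simp [h.idem_left hB, hvK]
  refine ⟨w, hwE, ZFSet.ext fun z => ⟨fun hz => ?_, fun hz => ?_⟩⟩
  · obtain ⟨v, hvw, hv, rfl⟩ := mem_collapse.1 hz
    exact (hmem v hv).1 hvw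
  · obtain ⟨v, hv, rfl⟩ := ih z hz (hB.mem_of_mem hy hz)
    exact mem_collapse.2 ⟨v, (hmem v hv).2 hz, hv, rfl⟩

theorem isElem_collapse_agreement :
    IsElem (agreement F G j i B) B (collapse (agreement F G j i B)) := by
  have := h.uniformlyDefinable_agreement
  have hinj := h.collapse_agreement_injOn hB hGB
  refine isElem_of_mem_iso ⟨fun w hw => ?_, hinj, fun y hy => ?_⟩ fun v hv w _ => ?_
  · exact collapse_mem _ hB (h.subset_left hB ((h.isElem_agreement hB hGB).1 w hw))
  · exact h.exists_collapse_agreement_eq hB hGB hy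
  · refine ⟨fun hvw => mem_collapse.2 ⟨v, hvw, hv, rfl⟩, fun hvw => ?_⟩
    obtain ⟨u, huw, hu, huv⟩ := mem_collapse.1 hvw
    rwa [hinj hv hu huv]

end Collapse

theorem right_eq_self (hA : IsInnerModel A) (hFA : F A = A) : G A = A := by
  have := h.operator_right
  have hN := h.isInnerModel_right hA
  have hGN := h.idem_right hA
  have hjA : IsElem A (F (G A)) (j A) := by simpa only [hFA] using h.isElem_left hA
  obtain ⟨φ, -, hφ⟩ : Definable .any fun S (_ : Fin 0 → ZFSet.{u}) => ∀ x ∈ S, x ∈ G S :=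
    inferInstance
  have hφN : ZSat (G A) φ ![] := (hφ _ hN _ fun k => k.elim0).2 hGN.ge
  have hφE : ZSat (agreement F G j i (G A)) φ ![] :=
    ((h.isElem_collapse_agreement hN hGN).2 0 φ ![] fun k => k.elim0).2 (by convert hφN)
  have hφK := ((h.isElem_agreement hN hGN).2 0 φ ![] fun k => k.elim0).1 hφE
  have hφA : ZSat A φ ![] := (hjA.2 0 φ ![] fun k => k.elim0).2 (by convert hφK)
  exact (h.subset_right hA).antisymm ((hφ A hA _ fun k => k.elim0).1 hφA)

end MutualEmbeddings

/-! ### The Levy complexity of locally defined classes -/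

theorem mem_omega_iff_exists_natZ {x : ZFSet.{u}} : x ∈ ZFSet.omega ↔ ∃ c, x = natZ c := by
  constructor
  · have hmk (k : ℕ) : ZFSet.mk (PSet.ofNat k) = natZ k := by
      induction k with
      | zero => rfl
      | succ k ih => rw [natZ, ← ih]; rfl
    refine Quotient.inductionOn x fun y ⟨⟨k⟩, hk⟩ => ⟨k, (ZFSet.sound hk).trans (hmk k)⟩
  · rintro ⟨c, rfl⟩
    induction c with
    | zero => exact ZFSet.omega_zero
    | succ c ih => exact ZFSet.omega_succ ih

theorem eq_omega_iff {x : ZFSet.{u}} : x = ZFSet.omega ↔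
    (∃ z ∈ x, z = natZ 0) ∧ (∀ z ∈ x, ∃ y ∈ x, y = insert z z) ∧
      ∀ y ∈ x, y = natZ 0 ∨ ∃ z ∈ x, y = insert z z := by
  constructor
  · rintro rfl
    simp only [mem_omega_iff_exists_natZ]
    refine ⟨⟨_, ⟨0, rfl⟩, rfl⟩, ?_, ?_⟩
    · rintro _ ⟨c, rfl⟩
      exact ⟨_, ⟨c + 1, rfl⟩, rfl⟩
    · rintro _ ⟨_ | c, rfl⟩
      exacts [.inl rfl, .inr ⟨_, ⟨c, rfl⟩, rfl⟩]
  · rintro ⟨⟨_, h₀, rfl⟩, hsucc, hmin⟩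
    ext y
    refine ⟨fun hy => ?_, fun hy => ?_⟩
    · induction y using ZFSet.inductionOn with | h y ih =>
      rcases hmin y hy with rfl | ⟨z, hz, rfl⟩
      exacts [ZFSet.omega_zero, ZFSet.omega_succ (ih z (ZFSet.mem_insert z z) hz)]
    · obtain ⟨c, rfl⟩ := mem_omega_iff_exists_natZ.1 hy
      induction c with
      | zero => exact h₀
      | succ c ih =>
        obtain ⟨_, hy', rfl⟩ := hsucc _ (ih (mem_omega_iff_exists_natZ.2 ⟨c, rfl⟩))
        exact hy'

theorem IsInnerModel.natZ_mem {S : Set ZFSet.{u}} (hS : IsInnerModel S) (c : ℕ) : natZ c ∈ S :=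
  hS.mem_of_mem hS.omega_mem (mem_omega_iff_exists_natZ.2 ⟨c, rfl⟩)

theorem SurjFun.mem_of_pair_mem {f a b x y : ZFSet.{u}} (hf : SurjFun f a b)
    (h : ZFSet.pair x y ∈ f) : x ∈ a ∧ y ∈ b := ZFSet.pair_mem_prod.1 (hf.1.1 h)

theorem SurjFun.pair_mem_unique {f a b x y y' : ZFSet.{u}} (hf : SurjFun f a b)
    (h : ZFSet.pair x y ∈ f) (h' : ZFSet.pair x y' ∈ f) : y = y' :=
  (hf.1.2 x (hf.mem_of_pair_mem h).1).unique h h'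

namespace Definable

variable {Γ : Complexity} {n : ℕ}

section Boolean

variable [Γ.IsBoolean]

instance eq_insert_self (i j : Fin n) :
    Definable Γ fun (_ : Set ZFSet.{u}) v => v i = insert (v j) (v j) :=
  (inferInstance : Definable Γ fun _ v =>
    v j ∈ v i ∧ v j ⊆ v i ∧ ∀ x ∈ v i, x = v j ∨ x ∈ v j).congr fun _ _ v _ => by
      refine ⟨fun h => by simp +contextual [h, ZFSet.subset_def], fun ⟨h, hsub, hmem⟩ => ?_⟩
      ext x
      rw [ZFSet.mem_insert_iff]
      exact ⟨hmem x, by rintro (rfl | hx); exacts [h, hsub hx]⟩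

instance eq_natZ : ∀ {n : ℕ} (c : ℕ) (i : Fin n),
    Definable Γ fun (_ : Set ZFSet.{u}) v => v i = natZ c
  | _, 0, i => (inferInstance : Definable Γ fun _ v => ∀ x ∈ v i, False).congr
      fun _ _ _ _ => ZFSet.eq_empty _
  | n, c + 1, i => by
    have ih (i : Fin (n + 1)) := eq_natZ (n := n + 1) c i
    exact (inferInstance : Definable Γ fun _ v => ∃ x ∈ v i, x = natZ c ∧
      v i = insert x x).congr fun _ _ v _ => by simp +contextual [natZ]

instance eq_omega (i : Fin n) : Definable Γ fun (_ : Set ZFSet.{u}) v => v i = ZFSet.omega :=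
  (inferInstance : Definable Γ fun _ v => (∃ z ∈ v i, z = natZ 0) ∧
    (∀ z ∈ v i, ∃ y ∈ v i, y = insert z z) ∧
      ∀ y ∈ v i, y = natZ 0 ∨ ∃ z ∈ v i, y = insert z z).congr fun _ _ _ _ => eq_omega_iff

instance omega_mem (i : Fin n) : Definable Γ fun (_ : Set ZFSet.{u}) v => ZFSet.omega ∈ v i :=
  (inferInstance : Definable Γ fun _ v => ∃ x ∈ v i, x = ZFSet.omega).congr
    fun _ _ _ _ => by simp

instance isFunc (i j k : Fin n) :
    Definable Γ fun (_ : Set ZFSet.{u}) v => ZFSet.IsFunc (v i) (v j) (v k) :=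
  (inferInstance : Definable Γ fun _ v =>
    (∀ p ∈ v k, ∃ x ∈ v i, ∃ y ∈ v j, p = ZFSet.pair x y) ∧
      ∀ x ∈ v i, ∃ y ∈ v j, ZFSet.pair x y ∈ v k ∧
        ∀ y' ∈ v j, ZFSet.pair x y' ∈ v k → y' = y).congr fun _ _ v _ => by
    have hsub : v k ⊆ ZFSet.prod (v i) (v j) ↔
        ∀ p ∈ v k, ∃ x ∈ v i, ∃ y ∈ v j, p = ZFSet.pair x y := by
      simp only [ZFSet.subset_def, ZFSet.mem_prod]
    refine (and_congr_left' hsub).trans (and_congr_right fun h => forall₂_congr fun x _ => ?_)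
    have hmem {y} (hy : ZFSet.pair x y ∈ v k) := (ZFSet.pair_mem_prod.1 (hsub.2 h hy)).2
    exact ⟨fun ⟨y, hy, huniq⟩ => ⟨y, hmem hy, hy, fun y' _ => huniq y'⟩,
      fun ⟨y, _, hy, huniq⟩ => ⟨y, hy, fun y' hy' => huniq y' (hmem hy') hy'⟩⟩

instance surjFun (i j k : Fin n) :
    Definable Γ fun (_ : Set ZFSet.{u}) v => SurjFun (v i) (v j) (v k) :=
  (inferInstance : Definable Γ fun _ v =>
    ZFSet.IsFunc (v j) (v k) (v i) ∧ ∀ y ∈ v k, ∃ x ∈ v j, ZFSet.pair x y ∈ v i).congr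
      fun _ _ _ _ => Iff.rfl

instance injFun (i j k : Fin n) :
    Definable Γ fun (_ : Set ZFSet.{u}) v => InjFun (v i) (v j) (v k) :=
  (inferInstance : Definable Γ fun _ v => ZFSet.IsFunc (v j) (v k) (v i) ∧
    ∀ x ∈ v j, ∀ x' ∈ v j, ∀ y ∈ v k,
      ZFSet.pair x y ∈ v i → ZFSet.pair x' y ∈ v i → x = x').congr fun _ _ _ _ =>
    and_congr_right fun h => forall₄_congr fun _ _ _ _ =>
      ⟨fun H y _ => H y, fun H y hy => H y (ZFSet.pair_mem_prod.1 (h.1 hy)).2 hy⟩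

end Boolean

theorem zSat_mem : ∀ {m n : ℕ} (φ : setL.BoundedFormula Empty m) (ρ : Fin m → Fin n) (j : Fin n),
    Definable .delta0 fun (_ : Set ZFSet.{u}) v => ZSat {x | x ∈ v j} φ (v ∘ ρ)
  | _, _, .falsum, _, _ => falsum
  | _, _, .equal t u, ρ, _ => (eq (ρ (varIndex t)) (ρ (varIndex u))).congr fun _ _ _ _ => by
      simp only [ZSat, tval_eq_varIndex]; rfl
  | _, _, .rel .mem ts, ρ, _ =>
    (mem (ρ (varIndex (ts 0))) (ρ (varIndex (ts 1)))).congr fun _ _ _ _ => by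
      simp only [ZSat, tval_eq_varIndex]; rfl
  | _, _, .imp φ ψ, ρ, j => imp (hP := zSat_mem φ ρ j) (hQ := zSat_mem ψ ρ j)
  | _, _, .all φ, ρ, j =>
    ball (R := fun _ v x => ZSat {x | x ∈ v j} φ (Fin.snoc (v ∘ ρ) x)) j
      (hR := (zSat_mem φ (liftRenaming ρ) j.castSucc).congr fun _ _ w _ => by
        conv_rhs => rw [← snoc_castSucc_last w, snoc_comp_liftRenaming, Fin.snoc_castSucc])

end Definable

section StrongLimits

instance Definable.isCardIn {n k : ℕ} (i : Fin n) :
    Definable (.pi (k + 1)) fun (S : Set ZFSet.{u}) v => IsCardIn S (v i) :=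
  (inferInstance : Definable (.pi (k + 1)) fun S v =>
    (v i).IsOrdinal ∧ ∀ f ∈ S, ∀ α ∈ v i, ¬ SurjFun f α (v i)).congr fun _ _ _ _ =>
      and_congr_right fun _ => ⟨fun h f hf α hα => h α hα f hf, fun h α hα f hf => h f hf α hα⟩

variable {S : Set ZFSet.{u}} {f x y μ : ZFSet.{u}}

theorem subset_prod_of_isFunc (h : ZFSet.IsFunc x y f) {x' y' : ZFSet} (hx : x ⊆ x') (hy : y ⊆ y') :
    f ⊆ ZFSet.prod x' y' := by
  intro p hp
  obtain ⟨a, ha, b, hb, rfl⟩ := ZFSet.mem_prod.1 (h.1 hp)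
  exact ZFSet.pair_mem_prod.2 ⟨hx ha, hy hb⟩

theorem IsInnerModel.forall_strongLimit_iff (hS : IsInnerModel S) (hμ : μ ∈ S)
    (htrans : μ.IsTransitive) :
    (∀ κ ∈ μ, ∀ p ∈ S, (∀ z, z ∈ p ↔ z ∈ S ∧ z ⊆ κ) → ∃ α ∈ μ, ∃ f ∈ S, InjFun f p α) ↔
      ∃ q ∈ S, ∃ g ∈ S, (∀ y ∈ S, y ⊆ μ → y ∈ q) ∧ ∀ κ ∈ μ, ∃ p ∈ g, (∀ z ∈ p, z ⊆ κ) ∧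
        (∀ z ∈ q, z ⊆ κ → z ∈ p) ∧ ∃ α ∈ μ, ∃ f ∈ g, InjFun f p α := by
  constructor
  · intro H
    obtain ⟨q, hq, hqμ⟩ := hS.exists_powerset hμ
    obtain ⟨g₁, hg₁, hg₁q⟩ := hS.exists_powerset hq
    obtain ⟨g₂, hg₂, hg₂q⟩ := hS.exists_powerset (hS.prod_mem hq hμ)
    refine ⟨q, hq, g₁ ∪ g₂, hS.union_mem hg₁ hg₂, fun y hy hyμ => (hqμ y).2 ⟨hy, hyμ⟩,
      fun κ hκ => ?_⟩
    obtain ⟨p, hp, hpκ⟩ := hS.exists_powerset (hS.mem_of_mem hμ hκ)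
    obtain ⟨α, hα, f, hf, hinj⟩ := H κ hκ p hp hpκ
    have hpq : p ⊆ q := fun z hz =>
      (hqμ z).2 (((hpκ z).1 hz).imp_right fun hzκ => hzκ.trans (htrans κ hκ))
    exact ⟨p, ZFSet.mem_union.2 (.inl ((hg₁q p).2 ⟨hp, hpq⟩)), fun z hz => ((hpκ z).1 hz).2,
      fun z hz hzκ => (hpκ z).2 ⟨hS.mem_of_mem hq hz, hzκ⟩, α, hα, f, ZFSet.mem_union.2
        (.inr ((hg₂q f).2 ⟨hf, subset_prod_of_isFunc hinj.1 hpq (htrans α hα)⟩)), hinj⟩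
  · rintro ⟨q, -, g, hg, hqμ, H⟩ κ hκ p _ hpκ
    obtain ⟨p', hp', hsub, hsup, α, hα, f, hf, hinj⟩ := H κ hκ
    obtain rfl : p = p' := by
      ext z
      rw [hpκ]
      exact ⟨fun ⟨hz, hzκ⟩ => hsup z (hqμ z hz (hzκ.trans (htrans κ hκ))) hzκ,
        fun hz => ⟨hS.mem_of_mem (hS.mem_of_mem hg hp') hz, hsub z hz⟩⟩
    exact ⟨α, hα, f, hS.mem_of_mem hg hf, hinj⟩

instance Definable.strongLimitIn {n k : ℕ} (i : Fin n) :
    Definable (.sigma (k + 2)) fun (S : Set ZFSet.{u}) v => StrongLimitIn S (v i) :=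
  (inferInstance : Definable (.sigma (k + 2)) fun S v => IsCardIn S (v i) ∧ ZFSet.omega ∈ v i ∧
    ∃ q ∈ S, ∃ g ∈ S, (∀ y ∈ S, y ⊆ v i → y ∈ q) ∧ ∀ κ ∈ v i, ∃ p ∈ g, (∀ z ∈ p, z ⊆ κ) ∧
      (∀ z ∈ q, z ⊆ κ → z ∈ p) ∧ ∃ α ∈ v i, ∃ f ∈ g, InjFun f p α).congr fun _ hS _ hv =>
    and_congr_right fun hcard => and_congr_right fun _ =>
      hS.forall_strongLimit_iff (hv i) hcard.1.isTransitive

theorem StrongLimitIn.empty_mem (h : StrongLimitIn S μ) : ∅ ∈ μ :=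
  h.1.1.isTransitive _ h.2.1 ZFSet.omega_zero

end StrongLimits

section HereditarilySmallSets

variable {S : Set ZFSet.{u}} {c d f f' h t t' x y κ μ : ZFSet.{u}}

theorem IsInnerModel.exists_surjFun_of_subset (hS : IsInnerModel S) (hκ : κ ∈ S) (hf : f ∈ S)
    (hsurj : SurjFun f κ t) (ht' : t' ∈ S) (hsub : t' ⊆ t) (hd : d ∈ t') :
    ∃ g ∈ S, SurjFun g κ t' := by
  obtain ⟨g, hg, hgmem⟩ : ∃ g ∈ S, ∀ p, p ∈ g ↔ p ∈ ZFSet.prod κ t' ∧ ∃ α ∈ κ, ∃ y ∈ t',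
      p = ZFSet.pair α y ∧ (p ∈ f ∨ y = d ∧ ∀ z ∈ t', ¬ ZFSet.pair α z ∈ f) :=
    hS.separation (P := fun _ (v : Fin 5 → _) => ∃ α ∈ v 0, ∃ y ∈ v 1, v 4 = ZFSet.pair α y ∧
      (v 4 ∈ v 2 ∨ y = v 3 ∧ ∀ z ∈ v 1, ¬ ZFSet.pair α z ∈ v 2)) (p := ![κ, t', f, d])
      (by simpa [Fin.forall_fin_succ] using ⟨hκ, ht', hf, hS.mem_of_mem ht' hd⟩)
      (hS.prod_mem hκ ht')
  have hpair α y : ZFSet.pair α y ∈ g ↔ (α ∈ κ ∧ y ∈ t') ∧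
      (ZFSet.pair α y ∈ f ∨ y = d ∧ ∀ z ∈ t', ¬ ZFSet.pair α z ∈ f) := by
    rw [hgmem, ZFSet.pair_mem_prod]
    refine and_congr_right fun ⟨hα, hy⟩ => ⟨?_, fun h => ⟨α, hα, y, hy, rfl, h⟩⟩
    rintro ⟨_, -, _, -, he, h⟩
    obtain ⟨rfl, rfl⟩ := ZFSet.pair_injective he
    exact h
  refine ⟨g, hg, ⟨fun p hp => ((hgmem p).1 hp).1, fun α hα => ?_⟩, fun y hy => ?_⟩
  · by_cases hα' : ∃ z ∈ t', ZFSet.pair α z ∈ f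
    · obtain ⟨z, hz, hzf⟩ := hα'
      refine ⟨z, (hpair _ _).2 ⟨⟨hα, hz⟩, .inl hzf⟩, fun z' hz' => ?_⟩
      rcases ((hpair _ _).1 hz').2 with h | ⟨-, h⟩
      exacts [hsurj.pair_mem_unique h hzf, absurd hzf (h z hz)]
    · have hα'' z (hz : z ∈ t') : ¬ ZFSet.pair α z ∈ f := fun h => hα' ⟨z, hz, h⟩
      refine ⟨d, (hpair _ _).2 ⟨⟨hα, hd⟩, .inr ⟨rfl, hα''⟩⟩, fun z' hz' => ?_⟩
      obtain ⟨⟨-, hz't⟩, h | ⟨h, -⟩⟩ := (hpair _ _).1 hz'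
      exacts [absurd h (hα'' z' hz't), h]
  · obtain ⟨α, hα, hαy⟩ := hsurj.2 y (hsub hy)
    exact ⟨α, hα, (hpair _ _).2 ⟨⟨hα, hy⟩, .inl hαy⟩⟩

theorem surjFun_empty : SurjFun (∅ : ZFSet.{u}) ∅ ∅ := by
  simp [SurjFun, ZFSet.IsFunc]

theorem IsInnerModel.mem_hIn_iff (hS : IsInnerModel S) (hμ : μ ∈ S) (h₀ : ∅ ∈ μ) :
    x ∈ HIn S μ ↔ x ∈ S ∧ ∃ t ∈ S, x ⊆ t ∧ t.IsTransitive ∧ ∃ κ ∈ μ, ∃ f ∈ S, SurjFun f κ t := by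
  refine and_congr_right fun hx => ⟨?_, ?_⟩
  · rintro ⟨t, ht, ⟨hxt, htrans, -⟩, hsmall⟩
    exact ⟨t, ht, hxt, htrans, hsmall⟩
  · rintro ⟨t, -, hxt, htrans, κ, hκ, f, hf, hsurj⟩
    obtain ⟨t', ht', hclosure⟩ := hS.exists_isTransClosureOf hx
    refine ⟨t', ht', hclosure, ?_⟩
    rcases ZFSet.eq_empty_or_nonempty t' with rfl | ⟨d, hd⟩
    · exact ⟨∅, h₀, ∅, hS.empty_mem, surjFun_empty⟩
    · exact ⟨κ, hκ, hS.exists_surjFun_of_subset (hS.mem_of_mem hμ hκ) hf hsurj ht'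
        (hclosure.2.2 t hxt htrans) hd⟩

/-- The relation `c` on `κ` is the pullback of the membership relation of `t` along the map
`f : κ → t`. For surjective `f`, such relations code transitive sets by subsets of `κ × κ`. -/
def CodesMembership (c κ f t : ZFSet.{u}) : Prop :=
  ∀ α ∈ κ, ∀ β ∈ κ, ∀ y ∈ t, ∀ z ∈ t, ZFSet.pair α y ∈ f → ZFSet.pair β z ∈ f →
    (ZFSet.pair α β ∈ c ↔ y ∈ z)

theorem CodesMembership.subset (hc : CodesMembership c κ f t) (hc' : CodesMembership c κ f' t')
    (hf : SurjFun f κ t) (hf' : SurjFun f' κ t') (ht : t.IsTransitive) (ht' : t'.IsTransitive) :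
    t ⊆ t' := by
  suffices H : ∀ y ∈ t, ∀ α y', ZFSet.pair α y ∈ f → ZFSet.pair α y' ∈ f' → y = y' by
    intro y hy
    obtain ⟨α, hα, hαy⟩ := hf.2 y hy
    obtain ⟨y', hαy', -⟩ := hf'.1.2 α hα
    exact H y hy α y' hαy hαy' ▸ (hf'.mem_of_pair_mem hαy').2
  intro y
  induction y using ZFSet.inductionOn with | h y ih =>
  intro hy α y' hαy hαy'
  obtain ⟨hα, hy'⟩ := hf'.mem_of_pair_mem hαy'
  ext z
  constructor
  · intro hzy
    have hz := ht y hy hzy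
    obtain ⟨β, hβ, hβz⟩ := hf.2 z hz
    obtain ⟨z', hβz', -⟩ := hf'.1.2 β hβ
    obtain rfl := ih z hzy hz β z' hβz hβz'
    exact (hc' β hβ α hα z (hf'.mem_of_pair_mem hβz').2 y' hy' hβz' hαy').1
      ((hc β hβ α hα z hz y hy hβz hαy).2 hzy)
  · intro hzy'
    have hz := ht' y' hy' hzy'
    obtain ⟨β, hβ, hβz⟩ := hf'.2 z hz
    obtain ⟨z', hβz', -⟩ := hf.1.2 β hβ
    have hz' := (hf.mem_of_pair_mem hβz').2
    have hz'y := (hc β hβ α hα z' hz' y hy hβz' hαy).1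
      ((hc' β hβ α hα z hz y' hy' hβz hαy').2 hzy')
    exact ih z' hz'y hz' β z hβz' hβz ▸ hz'y

theorem IsInnerModel.exists_codesMembership (hS : IsInnerModel S) (hμ : μ ∈ S) (hκ : κ ⊆ μ)
    (hf : f ∈ S) (ht : t ∈ S) (hsurj : SurjFun f κ t) :
    ∃ c ∈ S, c ⊆ ZFSet.prod μ μ ∧ CodesMembership c κ f t := by
  obtain ⟨c, hc, hmem⟩ : ∃ c ∈ S, ∀ p, p ∈ c ↔ p ∈ ZFSet.prod μ μ ∧ ∃ α ∈ μ, ∃ β ∈ μ,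
      p = ZFSet.pair α β ∧ ∃ y ∈ t, ∃ z ∈ t, ZFSet.pair α y ∈ f ∧ ZFSet.pair β z ∈ f ∧ y ∈ z :=
    hS.separation (P := fun _ (v : Fin 4 → _) => ∃ α ∈ v 0, ∃ β ∈ v 0, v 3 = ZFSet.pair α β ∧
      ∃ y ∈ v 1, ∃ z ∈ v 1, ZFSet.pair α y ∈ v 2 ∧ ZFSet.pair β z ∈ v 2 ∧ y ∈ z)
      (p := ![μ, t, f]) (by simpa [Fin.forall_fin_succ] using ⟨hμ, ht, hf⟩) (hS.prod_mem hμ hμ)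
  refine ⟨c, hc, fun p hp => ((hmem p).1 hp).1, fun α hα β hβ y hy z hz hαy hβz => ?_⟩
  rw [hmem]
  constructor
  · rintro ⟨-, _, -, _, -, he, y', -, z', -, hαy', hβz', hyz⟩
    obtain ⟨rfl, rfl⟩ := ZFSet.pair_injective he
    rwa [hsurj.pair_mem_unique hαy hαy', hsurj.pair_mem_unique hβz hβz']
  · exact fun hyz => ⟨ZFSet.pair_mem_prod.2 ⟨hκ hα, hκ hβ⟩, α, hκ hα, β, hκ hβ, rfl,
      y, hy, z, hz, hαy, hβz, hyz⟩

theorem IsInnerModel.exists_transitive_images (hS : IsInnerModel S) (hμ : μ ∈ S)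
    (htrans : μ.IsTransitive) :
    ∃ b ∈ S, ∀ t ∈ S, t.IsTransitive → (∃ κ ∈ μ, ∃ f ∈ S, SurjFun f κ t) → t ∈ b := by
  obtain ⟨q, hq, hqμ⟩ := hS.exists_powerset (hS.prod_mem hμ hμ)
  obtain ⟨b, hb, hmem⟩ : ∃ b ∈ S, ∀ t, t ∈ b ↔ ∃ d ∈ ZFSet.prod q μ, t ∈ S ∧
      ∃ c ∈ S, ∃ κ ∈ S, ∃ f ∈ S, d = ZFSet.pair c κ ∧ t.IsTransitive ∧ SurjFun f κ t ∧
        CodesMembership c κ f t := by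
    refine hS.replacement (P := fun S (v : Fin 2 → _) => ∃ c ∈ S, ∃ κ ∈ S, ∃ f ∈ S,
      v 0 = ZFSet.pair c κ ∧ (v 1).IsTransitive ∧ SurjFun f κ (v 1) ∧
        ∀ α ∈ κ, ∀ β ∈ κ, ∀ y ∈ v 1, ∀ z ∈ v 1, ZFSet.pair α y ∈ f → ZFSet.pair β z ∈ f →
          (ZFSet.pair α β ∈ c ↔ y ∈ z)) (p := ![]) (by simp) (hS.prod_mem hq hμ) ?_
    rintro _ - t - t' - ⟨c, -, κ, -, f, -, rfl, ht, hf, hc⟩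
      ⟨_, -, _, -, f', -, he, ht', hf', hc'⟩
    obtain ⟨rfl, rfl⟩ := ZFSet.pair_injective he
    exact (CodesMembership.subset hc hc' hf hf' ht ht').antisymm
      (CodesMembership.subset hc' hc hf' hf ht' ht)
  refine ⟨b, hb, fun t ht htt ⟨κ, hκ, f, hf, hsurj⟩ => (hmem t).2 ?_⟩
  obtain ⟨c, hc, hcμ, hcodes⟩ := hS.exists_codesMembership hμ (htrans κ hκ) hf ht hsurj
  exact ⟨ZFSet.pair c κ, ZFSet.pair_mem_prod.2 ⟨(hqμ c).2 ⟨hc, hcμ⟩, hκ⟩, ht, c, hc, κ,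
    hS.mem_of_mem hμ hκ, f, hf, rfl, htt, hsurj, hcodes⟩

theorem IsInnerModel.exists_eq_hIn (hS : IsInnerModel S) (hμ : μ ∈ S) (htrans : μ.IsTransitive)
    (h₀ : ∅ ∈ μ) : ∃ h ∈ S, {x | x ∈ h} = HIn S μ := by
  obtain ⟨b, hb, hmemb⟩ := hS.exists_transitive_images hμ htrans
  obtain ⟨d, hd, hmemd⟩ := hS.exists_powerset (hS.sUnion_mem hb)
  obtain ⟨h, hh, hmem⟩ : ∃ h ∈ S, ∀ x, x ∈ h ↔ x ∈ d ∧ ∃ t ∈ S, x ⊆ t ∧ t.IsTransitive ∧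
      ∃ κ ∈ μ, ∃ f ∈ S, SurjFun f κ t :=
    hS.separation (P := fun S (v : Fin 2 → _) => ∃ t ∈ S, v 1 ⊆ t ∧ t.IsTransitive ∧
      ∃ κ ∈ v 0, ∃ f ∈ S, SurjFun f κ t) (p := ![μ]) (Fin.forall_fin_one.2 hμ) hd
  refine ⟨h, hh, Set.ext fun x => (hmem x).trans (.trans ?_ (hS.mem_hIn_iff hμ h₀).symm)⟩
  refine and_congr_left fun ⟨t, ht, hxt, htt, hsmall⟩ => (hmemd x).trans ?_
  exact and_iff_left_of_imp fun _ y hy =>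
    ZFSet.mem_sUnion.2 ⟨t, hmemb t ht htt hsmall, hxt hy⟩

theorem IsInnerModel.eq_hIn_iff (hS : IsInnerModel S) (hμ : μ ∈ S) (htrans : μ.IsTransitive)
    (h₀ : ∅ ∈ μ) (hh : h ∈ S) : {x | x ∈ h} = HIn S μ ↔
      (∃ g ∈ S, ∀ y ∈ h, ∃ t ∈ g, y ⊆ t ∧ t.IsTransitive ∧ ∃ κ ∈ μ, ∃ f ∈ g, SurjFun f κ t) ∧
      ∀ y ∈ S, ∀ t ∈ S, ∀ f ∈ S, (y ⊆ t ∧ t.IsTransitive ∧ ∃ κ ∈ μ, SurjFun f κ t) → y ∈ h := by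
  constructor
  · intro H
    have hmem y : y ∈ h ↔ _ := (Set.ext_iff.1 H y).trans (hS.mem_hIn_iff hμ h₀)
    refine ⟨?_, fun y hy t ht f hf ⟨hyt, htt, κ, hκ, hsurj⟩ =>
      (hmem y).2 ⟨hy, t, ht, hyt, htt, κ, hκ, f, hf, hsurj⟩⟩
    obtain ⟨g₁, hg₁, hg₁h⟩ := hS.exists_powerset hh
    obtain ⟨g₂, hg₂, hg₂h⟩ := hS.exists_powerset (hS.prod_mem hμ hh)
    refine ⟨g₁ ∪ g₂, hS.union_mem hg₁ hg₂, fun y hy => ?_⟩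
    obtain ⟨-, t, ht, hyt, htt, κ, hκ, f, hf, hsurj⟩ := (hmem y).1 hy
    have hth : t ⊆ h := fun z hz =>
      (hmem z).2 ⟨hS.mem_of_mem ht hz, t, ht, htt z hz, htt, κ, hκ, f, hf, hsurj⟩
    exact ⟨t, ZFSet.mem_union.2 (.inl ((hg₁h t).2 ⟨ht, hth⟩)), hyt, htt, κ, hκ, f,
      ZFSet.mem_union.2 (.inr ((hg₂h f).2
        ⟨hf, subset_prod_of_isFunc hsurj.1 (htrans κ hκ) hth⟩)), hsurj⟩
  · rintro ⟨⟨g, hg, hsmall⟩, hall⟩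
    refine Set.ext fun y => .trans ⟨fun hy => ?_, ?_⟩ (hS.mem_hIn_iff hμ h₀).symm
    · obtain ⟨t, ht, hyt, htt, κ, hκ, f, hf, hsurj⟩ := hsmall y hy
      exact ⟨hS.mem_of_mem hh hy, t, hS.mem_of_mem hg ht, hyt, htt, κ, hκ, f,
        hS.mem_of_mem hg hf, hsurj⟩
    · rintro ⟨hy, t, ht, hyt, htt, κ, hκ, f, hf, hsurj⟩
      exact hall y hy t ht f hf ⟨hyt, htt, κ, hκ, hsurj⟩

instance Definable.zSat_mem_singleton {n : ℕ} (θ : setL.BoundedFormula Empty 1) (i j : Fin n) :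
    Definable .delta0 fun (_ : Set ZFSet.{u}) v => ZSat {x | x ∈ v j} θ ![v i] :=
  (zSat_mem θ ![i] j).congr fun _ _ v _ => by
    rw [show v ∘ ![i] = ![v i] from funext <| Fin.forall_fin_one.2 rfl]

instance Definable.mem_locClass {n : ℕ} (θ : setL.BoundedFormula Empty 1) (i : Fin n) :
    Definable (.sigma 2) fun (S : Set ZFSet.{u}) v => v i ∈ locClass S θ := by
  refine (inferInstance : Definable (.sigma 2) fun S v => ∃ μ ∈ S, ∃ h ∈ S, StrongLimitIn S μ ∧
    ((∃ g ∈ S, ∀ y ∈ h, ∃ t ∈ g, y ⊆ t ∧ t.IsTransitive ∧ ∃ κ ∈ μ, ∃ f ∈ g, SurjFun f κ t) ∧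
      ∀ y ∈ S, ∀ t ∈ S, ∀ f ∈ S, (y ⊆ t ∧ t.IsTransitive ∧ ∃ κ ∈ μ, SurjFun f κ t) → y ∈ h) ∧
    v i ∈ h ∧ ZSat {x | x ∈ h} θ ![v i]).congr fun S hS v _ => ?_
  refine exists_congr fun μ => and_congr_right fun hμ => ⟨?_, ?_⟩
  · rintro ⟨hlim, hx, hsat⟩
    obtain ⟨h, hh, hH⟩ := hS.exists_eq_hIn hμ hlim.1.1.isTransitive hlim.empty_mem
    rw [← hH] at hx hsat
    exact ⟨h, hh, hlim, (hS.eq_hIn_iff hμ hlim.1.1.isTransitive hlim.empty_mem hh).1 hH, hx, hsat⟩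
  · rintro ⟨h, hh, hlim, hH, hx, hsat⟩
    rw [← hS.eq_hIn_iff hμ hlim.1.1.isTransitive hlim.empty_mem hh] at hH
    exact ⟨hlim, hH ▸ hx, hH ▸ hsat⟩

theorem exists_levySigma_eq_locClass (θ : setL.BoundedFormula Empty 1) :
    ∃ γ : setL.BoundedFormula Empty 1, LevySigma 2 γ ∧ ∀ S : Set ZFSet.{u}, IsInnerModel S →
      {x | x ∈ S ∧ ZSat S γ ![x]} = locClass S θ := by
  obtain ⟨γ, hγ, hloc⟩ := (Definable.mem_locClass.{u} θ (0 : Fin 1)).exists_formula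
  refine ⟨γ, hγ, fun S hS => Set.ext fun x => ⟨fun ⟨hx, hsat⟩ => ?_, fun hx => ?_⟩⟩
  · exact (hloc S hS ![x] (Fin.forall_fin_one.2 hx)).1 hsat
  · obtain ⟨_, _, -, ⟨hxS, -⟩, -⟩ := id hx
    exact ⟨hxS, (hloc S hS ![x] (Fin.forall_fin_one.2 hxS)).2 hx⟩

end HereditarilySmallSets

/-! ### Uniqueness -/

theorem IsElem.eq_of_surjOn {A B : Set ZFSet.{u}} {f : ZFSet.{u} → ZFSet.{u}} (hf : IsElem A B f)
    (hA : IsTransClass A) (hB : IsTransClass B) (hsurj : Set.SurjOn f A B) : A = B := by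
  have hid (x) (hx : x ∈ A) : f x = x := by
    induction x using ZFSet.inductionOn with | h x ih =>
    ext z
    constructor
    · intro hz
      obtain ⟨w, hw, rfl⟩ := hsurj (hB _ (hf.1 x hx) z hz)
      have hwx := (hf.mem_iff hw hx).2 hz
      rwa [ih w hwx hw]
    · intro hz
      have hzA := hA x hx z hz
      rw [← ih z hz hzA]
      exact (hf.mem_iff hzA hx).1 hz
  rw [← hsurj.image_eq_of_mapsTo hf.1, Set.image_congr hid, Set.image_id']

theorem THolds.of_isInnerModel {θT : setL.Sentence} (hT : THolds θT (Set.univ : Set ZFSet.{u}))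
    {S : Set ZFSet.{u}} (hS : IsInnerModel S) : THolds θT S :=
  ⟨hS.1, fun A _ h => hT.2 A trivial h⟩

theorem THolds.isInnerModel_univ {θT : setL.Sentence}
    (hT : THolds θT (Set.univ : Set ZFSet.{u})) : IsInnerModel (Set.univ : Set ZFSet.{u}) :=
  ⟨hT.1, fun _ _ => trivial⟩

theorem LocallyDefinesInner.innerModelOperator {θT : setL.Sentence}
    {θ : setL.BoundedFormula Empty 1} (h : LocallyDefinesInner.{u} θT θ)
    (hT : THolds θT (Set.univ : Set ZFSet.{u})) :
    InnerModelOperator fun S : Set ZFSet.{u} => locClass S θ where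
  definable := (Definable.mem_locClass θ 0).to_any
  subset hS := (h _ hS (hT.of_isInnerModel hS)).1.1
  isInnerModel hS := (h _ hS (hT.of_isInnerModel hS)).1.2

theorem Definable.zSat_natZ {k : ℕ} {ψ : setL.BoundedFormula Empty 3} (hψ : LevySigma (k + 1) ψ)
    (c : ℕ) : Definable (.sigma (k + 1)) fun (S : Set ZFSet.{u}) (v : Fin 2 → ZFSet) =>
      ZSat S ψ ![natZ c, v 0, v 1] := by
  have : Definable (.sigma (k + 1)) fun (S : Set ZFSet.{u}) (w : Fin 3 → ZFSet) =>
      ZSat S ψ ![w 2, w 0, w 1] := by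
    refine ((sigma_of_formula hψ).comp ![2, 0, 1]).congr fun S _ w _ => ?_
    rw [show ![w 2, w 0, w 1] = fun i => w (![2, 0, 1] i) from
      funext <| Fin.forall_fin_succ.2 ⟨rfl, Fin.forall_fin_two.2 ⟨rfl, rfl⟩⟩]
  exact (sigma_ex (R := fun S v u => u = natZ c ∧ ZSat S ψ ![u, v 0, v 1])
    (hR := sigma_and (hQ := this))).congr fun S hS v _ =>
      ⟨fun h => ⟨_, hS.natZ_mem c, rfl, h⟩, fun ⟨_, _, hu, h⟩ => hu ▸ h⟩

theorem Definable.graph_comp {k : ℕ} {F G : Set ZFSet.{u} → Set ZFSet.{u}}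
    {j i : Set ZFSet.{u} → ZFSet.{u} → ZFSet.{u}}
    (hj : Definable (.sigma (k + 1)) fun S (v : Fin 2 → _) => v 0 ∈ F S ∧ j S (v 0) = v 1)
    (hi : Definable (.sigma (k + 1)) fun S (v : Fin 2 → _) => v 0 ∈ G S ∧ i S (v 0) = v 1)
    (hG : ∀ S, IsInnerModel S → G S ⊆ S)
    (hjG : ∀ S, IsInnerModel S → Set.MapsTo (j S) (F S) (G S)) :
    Definable (.sigma (k + 1)) fun S (v : Fin 2 → _) => v 0 ∈ F S ∧ i S (j S (v 0)) = v 1 :=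
  (sigma_ex (R := fun S v z => (v 0 ∈ F S ∧ j S (v 0) = z) ∧ z ∈ G S ∧ i S z = v 1)
    (hR := sigma_and (hP := hj.comp ![0, 2]) (hQ := hi.comp ![2, 1]))).congr fun S hS _ _ =>
      ⟨fun ⟨hv, hw⟩ => ⟨_, hG S hS (hjG S hS hv), ⟨hv, rfl⟩, hjG S hS hv, hw⟩,
        fun ⟨_, _, ⟨hv, hz⟩, _, hw⟩ => ⟨hv, hz ▸ hw⟩⟩

theorem SigmaRigid.eqOn_id {n : ℕ} {M : Set ZFSet.{u}} {f : ZFSet.{u} → ZFSet.{u}}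
    {P : Set ZFSet.{u} → (Fin 2 → ZFSet.{u}) → Prop} (hrig : SigmaRigid n M) (hf : IsElem M M f)
    (hU : IsInnerModel (Set.univ : Set ZFSet.{u})) (hP : Definable (.sigma n) P)
    (hfP : ∀ v, P Set.univ v ↔ v 0 ∈ M ∧ f (v 0) = v 1) : Set.EqOn f id M := by
  obtain ⟨γ, hγ, hγP⟩ := hP
  by_contra hne
  simp only [Set.EqOn, not_forall, exists_prop] at hne
  exact hrig ⟨f, γ, hγ, fun x y =>
    ((hγP _ hU ![x, y] fun _ => trivial).trans (hfP ![x, y])).symm, hf, hne⟩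

theorem MutualEmbeddings.eq_of_sigmaRigid {k : ℕ} {F G : Set ZFSet.{u} → Set ZFSet.{u}}
    {j i : Set ZFSet.{u} → ZFSet.{u} → ZFSet.{u}} (h : MutualEmbeddings F G j i)
    (hU : IsInnerModel (Set.univ : Set ZFSet.{u}))
    (hj : Definable (.sigma (k + 1)) fun S (v : Fin 2 → _) => v 0 ∈ F S ∧ j S (v 0) = v 1)
    (hi : Definable (.sigma (k + 1)) fun S (v : Fin 2 → _) => v 0 ∈ G S ∧ i S (v 0) = v 1)
    (hrig : SigmaRigid (k + 1) (F Set.univ)) : F Set.univ = G Set.univ := by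
  have hM := h.isInnerModel_left hU
  have hN := h.isInnerModel_right hU
  have hGM : G (F Set.univ) = F Set.univ := h.right_eq_self hM (h.idem_left hU)
  have hFN {S} (hS : IsInnerModel S) : F (G S) = G S :=
    h.symm.right_eq_self (h.isInnerModel_right hS) (h.idem_right hS)
  have hj' {S} (hS : IsInnerModel S) : IsElem (F S) (G S) (j S) := hFN hS ▸ h.isElem_left hS
  have hi' : IsElem (G Set.univ) (F Set.univ) (i Set.univ) := by
    simpa only [hGM] using h.isElem_right hU
  have hid : Set.EqOn (fun x => i Set.univ (j Set.univ x)) id (F Set.univ) :=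
    hrig.eqOn_id ((hj' hU).comp hi') hU
      (hj.graph_comp hi (fun _ => h.subset_right) fun S hS => (hj' hS).1) fun _ => Iff.rfl
  exact (hi'.eq_of_surjOn hN.isTransClass hM.isTransClass fun x hx =>
    ⟨_, (hj' hU).1 x hx, hid hx⟩).symm

theorem SigmaResemblesCore.exists_uniform_embeddings {k : ℕ} {θT : setL.Sentence}
    {code : setL.BoundedFormula Empty 1 → ℕ} {M : Set ZFSet.{u}}
    (hM : SigmaResemblesCore.{u} (k + 1) θT code M)
    (hT : THolds θT (Set.univ : Set ZFSet.{u})) :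
    ∃ θ : setL.BoundedFormula Empty 1, LocallyDefinesCloseInner.{u} θT θ ∧
      M = locClass Set.univ θ ∧
      (∀ S : Set ZFSet.{u}, IsInnerModel S →
        ModelsVeqHOD (locClass S θ) ∧ locClass (locClass S θ) θ = locClass S θ) ∧
      ∀ θ' : setL.BoundedFormula Empty 1, LocallyDefinesCloseInner.{u} θT θ' →
        ∃ j : Set ZFSet.{u} → ZFSet.{u} → ZFSet.{u},
          (∀ S, IsInnerModel S → IsElem (locClass S θ) (locClass (locClass S θ') θ) (j S)) ∧
          Definable (.sigma (k + 1)) fun S (v : Fin 2 → _) =>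
            v 0 ∈ locClass S θ ∧ j S (v 0) = v 1 := by
  obtain ⟨θ, ψ, hψ, hθ, rfl, H⟩ := hM
  refine ⟨θ, hθ, rfl, fun S hS => ?_, fun θ' hθ' => ?_⟩
  · exact ⟨(H S hS (hT.of_isInnerModel hS)).1, (H S hS (hT.of_isInnerModel hS)).2.1⟩
  obtain ⟨γ, hγ, hγloc⟩ := exists_levySigma_eq_locClass.{u} θ'
  have hj (S : Set ZFSet.{u}) (hS : IsInnerModel S) : ∃ j : ZFSet.{u} → ZFSet.{u},
      IsElem (locClass S θ) (locClass (locClass S θ') θ) j ∧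
      ∀ x y, (x ∈ locClass S θ ∧ j x = y) ↔ ZSat S ψ ![natZ (code γ), x, y] := by
    have hTS := hT.of_isInnerModel hS
    simpa only [hγloc S hS, hθ'.1 S hS hTS, hθ'.2 S hS hTS, forall_const] using
      (H S hS hTS).2.2 γ hγ
  choose! j hj using hj
  exact ⟨j, fun S hS => (hj S hS).1,
    (Definable.zSat_natZ hψ (code γ)).congr fun S hS _ _ => (hj S hS).2 _ _⟩

theorem core_model_uniqueness_general (n : ℕ) (hn : 1 ≤ n) (θT : setL.Sentence)
    (hT : THolds θT (Set.univ : Set ZFSet.{u}))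
    (code : setL.BoundedFormula Empty 1 → ℕ) (_hcode : Function.Injective code)
    (M N : Set ZFSet.{u}) (hM : SigmaResemblesCore.{u} n θT code M)
    (hN : SigmaResemblesCore.{u} n θT code N) (hrig : SigmaRigid n M) : M = N := by
  obtain ⟨k, rfl⟩ := Nat.exists_eq_add_of_le' hn
  have hU := hT.isInnerModel_univ
  obtain ⟨θ, hθ, rfl, hθS, hθj⟩ := hM.exists_uniform_embeddings hT
  obtain ⟨θ', hθ', rfl, hθS', hθi⟩ := hN.exists_uniform_embeddings hT
  obtain ⟨j, hj, hjdef⟩ := hθj θ' hθ'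
  obtain ⟨i, hi, hidef⟩ := hθi θ hθ
  have h : MutualEmbeddings (fun S => locClass S θ) (fun S => locClass S θ') j i :=
    { operator_left := hθ.1.innerModelOperator hT
      operator_right := hθ'.1.innerModelOperator hT
      idem_left := fun hS => (hθS _ hS).2
      idem_right := fun hS => (hθS' _ hS).2
      vEqHOD_left := fun hS => (hθS _ hS).1
      vEqHOD_right := fun hS => (hθS' _ hS).1
      isElem_left := fun hS => hj _ hS
      isElem_right := fun hS => hi _ hS
      definableMap_left := ⟨hjdef.to_any⟩
      definableMap_right := ⟨hidef.to_any⟩ }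
  exact h.eq_of_sigmaRigid hU hjdef hidef hrig

/-- Let `n ≥ 1` and let `T = ZFC + "∀ set of ordinals A, L[A] ⊨ θT"` be a
nice extension of ZFC.  Assume `T` (holds in `V`).  Suppose `M` and `N` are inner models
each of which Σ_n-resembles the core model over `T`, and `M` is Σ_n-rigid.  Then `M = N`. -/
theorem core_model_uniqueness (n : ℕ) (hn : 1 ≤ n)
    (θT : setL.Sentence) (hθT : LevyPi 2 θT)
    (hT : THolds θT (Set.univ : Set ZFSet.{u}))
    (code : setL.BoundedFormula Empty 1 → ℕ) (hcode : Function.Injective code)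
    (M N : Set ZFSet.{u}) (hMi : IsInnerModel M) (hNi : IsInnerModel N)
    (hM : SigmaResemblesCore.{u} n θT code M) (hN : SigmaResemblesCore.{u} n θT code N)
    (hrig : SigmaRigid n M) :
    M = N :=
  core_model_uniqueness_general n hn θT hT code hcode M N hM hN hrig
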